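/- arXiv:1109.2248 — 3 statements merged into one kernel-verified Lean document; each statement's English description precedes it below -/
import Mathlib

section
/- Let 1<p<∞ and let {Q_m} be a locally finite family of cubes in ℝ^n together with subcubes R_m ⊂ Q_m satisfying |Q_m| ≤ σ^n |R_m| for a fixed σ ≥ 1. Then for all nonnegative scalars a_m: ‖∑_m a_m χ_{Q_m}‖_{L^p(ℝ^n)} ≤ c(n,p,σ) ‖∑_m a_m χ_{R_m}‖_{L^p(ℝ^n)}. -/
open Metric MeasureTheory
open scoped ENNReal

lemma aux_lc {α : Type*} [MeasurableSpace α] (μ : Measure α) (N : α → ℝ≥0∞) (hN : Measurable N)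
    (hfin : ∀ z, N z ≠ ∞) (q : ℝ) (hq : 0 < q) :
    ∫⁻ z, N z ^ q ∂μ = ENNReal.ofReal q *
      ∫⁻ t in Set.Ioi (0:ℝ), μ {z | ENNReal.ofReal t < N z} * ENNReal.ofReal (t ^ (q - 1)) := by
  have h := lintegral_rpow_eq_lintegral_meas_lt_mul μ (f := fun z => (N z).toReal)
    (Filter.Eventually.of_forall fun z => ENNReal.toReal_nonneg)
    hN.ennreal_toReal.aemeasurable hq
  have e1 : ∀ z, ENNReal.ofReal ((N z).toReal ^ q) = N z ^ q := by
    intro z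
    rw [← ENNReal.ofReal_rpow_of_nonneg ENNReal.toReal_nonneg hq.le, ENNReal.ofReal_toReal (hfin z)]
  simp only [e1] at h
  rw [h]
  congr 1
  refine setLIntegral_congr_fun measurableSet_Ioi fun t ht => ?_
  have : {z | t < (N z).toReal} = {z | ENNReal.ofReal t < N z} := by
    ext z
    exact (ENNReal.ofReal_lt_iff_lt_toReal (le_of_lt ht) (hfin z)).symm
  simp only [this]

lemma aux_absorb {p q : ℝ} (h : p.HolderConjugate q) {X K : ℝ≥0∞} (hX : X ≠ ∞)
    (hle : X ≤ K * X ^ (1 / q)) : X ^ (1 / p) ≤ K := by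
  by_cases h0 : X = 0
  · rw [h0, ENNReal.zero_rpow_of_pos h.one_div_pos]; exact zero_le
  · have hs : X ^ (1/p) * X ^ (1/q) = X := by
      rw [← ENNReal.rpow_add _ _ h0 hX, h.one_div_add_one_div]; simp
    have h1 : X ^ (1/q) ≠ 0 := by
      simp [ENNReal.rpow_eq_zero_iff, h0, hX]
    have h2 : X ^ (1/q) ≠ ∞ := ENNReal.rpow_ne_top_of_nonneg h.symm.one_div_nonneg hX
    rw [← hs] at hle
    conv_rhs at hle => rw [hs]
    exact (ENNReal.mul_le_mul_iff_left h1 h2).1 hle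

lemma aux_doob {α : Type*} [MeasurableSpace α] (μ : Measure α) (N g : α → ℝ≥0∞) (hN : Measurable N)
    (hg : Measurable g) (hfin : ∀ z, N z ≠ ∞) {p q : ℝ} (h : p.HolderConjugate q) (C : ℝ≥0∞)
    (hC : C ≠ ∞)
    (hw : ∀ t : ℝ, 0 < t → ENNReal.ofReal t * μ {z | ENNReal.ofReal t < N z}
      ≤ C * ∫⁻ z in {z | ENNReal.ofReal t < N z}, g z ∂μ)
    (hNq : ∫⁻ z, N z ^ q ∂μ ≠ ∞) :
    (∫⁻ z, N z ^ q ∂μ) ^ (1 / q) ≤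
      (ENNReal.ofReal (q / (q - 1)) * C) * (∫⁻ z, g z ^ q ∂μ) ^ (1 / q) := by
  have hq := h.symm.pos
  have hq1 := h.symm.sub_one_pos
  apply aux_absorb h.symm hNq
  have hms : ∀ t : ℝ, MeasurableSet {z | ENNReal.ofReal t < N z} := fun t =>
    measurableSet_lt measurable_const hN
  calc ∫⁻ z, N z ^ q ∂μ = ENNReal.ofReal q *
        ∫⁻ t in Set.Ioi (0:ℝ), μ {z | ENNReal.ofReal t < N z} * ENNReal.ofReal (t ^ (q - 1)) :=
        aux_lc μ N hN hfin q hq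
    _ ≤ ENNReal.ofReal q *
        ∫⁻ t in Set.Ioi (0:ℝ), C * ((μ.withDensity g) {z | ENNReal.ofReal t < N z} *
          ENNReal.ofReal (t ^ (q - 1 - 1))) := by
        refine mul_le_mul' le_rfl ?_
        refine setLIntegral_mono' measurableSet_Ioi fun t ht => ?_
        have ht : 0 < t := ht
        rw [withDensity_apply _ (hms t)]
        have : t ^ (q - 1) = t * t ^ (q - 1 - 1) := by
          rw [Real.rpow_sub_one ht.ne' (q - 1)]; field_simp
        rw [this, ENNReal.ofReal_mul ht.le, ← mul_assoc, ← mul_assoc]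
        gcongr ?_ * _
        rw [mul_comm]
        exact hw t ht
    _ = (ENNReal.ofReal (q / (q - 1)) * C) * ∫⁻ z, N z ^ (q - 1) ∂(μ.withDensity g) := by
        rw [aux_lc (μ.withDensity g) N hN hfin (q - 1) hq1, lintegral_const_mul' _ _ hC]
        have : ENNReal.ofReal q = ENNReal.ofReal (q / (q - 1)) * ENNReal.ofReal (q - 1) := by
          rw [← ENNReal.ofReal_mul (by positivity)]; congr 1; field_simp
        rw [this]; ring
    _ = (ENNReal.ofReal (q / (q - 1)) * C) * ∫⁻ z, (g * fun z => N z ^ (q - 1)) z ∂μ := by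
        rw [lintegral_withDensity_eq_lintegral_mul _ hg (hN.pow_const _)]
    _ ≤ (ENNReal.ofReal (q / (q - 1)) * C) * ((∫⁻ z, g z ^ q ∂μ) ^ (1 / q) *
          (∫⁻ z, (N z ^ (q - 1)) ^ p ∂μ) ^ (1 / p)) := by
        gcongr
        exact ENNReal.lintegral_mul_le_Lp_mul_Lq μ h.symm hg.aemeasurable (hN.pow_const _).aemeasurable
    _ = _ := by
        simp only [← ENNReal.rpow_mul, h.symm.sub_one_mul_conj]
        ring

lemma aux_weak {n : ℕ} (S : Finset ℕ) (x : ℕ → (Fin n → ℝ)) (r : ℕ → ℝ) (hr : ∀ m, 0 < r m)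
    (A : ℕ → ℝ≥0∞) (g : (Fin n → ℝ) → ℝ≥0∞)
    (hA : ∀ m, A m * volume (closedBall (x m) (r m)) ≤ ∫⁻ z in closedBall (x m) (r m), g z)
    (t : ℝ≥0∞) (E : Set (Fin n → ℝ)) (hE : E = ⋃ m ∈ S.filter (fun m => t < A m), closedBall (x m) (r m)) :
    t * volume E ≤ ENNReal.ofReal (5 ^ n) * ∫⁻ z in E, g z := by
  obtain ⟨u, hu, hd, hcov⟩ := Vitali.exists_disjoint_subfamily_covering_enlargement_closedBall
    (S.filter (fun m => t < A m) : Set ℕ) x r (∑ m ∈ S, r m)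
    (fun a ha => Finset.single_le_sum (f := r) (fun i _ => (hr i).le)
      (Finset.mem_filter.1 (Finset.mem_coe.1 ha)).1) 5 (by norm_num)
  have hfin : u.Finite := (Finset.finite_toSet _).subset hu
  lift u to Finset ℕ using hfin
  have hu' : ∀ b ∈ u, b ∈ S ∧ t < A b := fun b hb => by
    have := hu (Finset.mem_coe.2 hb); simpa using this
  have h1 : E ⊆ ⋃ b ∈ u, closedBall (x b) (5 * r b) := by
    rw [hE]
    refine Set.iUnion₂_subset fun m hm => ?_
    obtain ⟨b, hb, hs⟩ := hcov m (Finset.mem_coe.2 hm)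
    exact hs.trans (Set.subset_biUnion_of_mem (u := fun b => closedBall (x b) (5 * r b)) hb)
  have h2 : (⋃ b ∈ u, closedBall (x b) (r b)) ⊆ E := by
    rw [hE]
    refine Set.iUnion₂_subset fun m hm => ?_
    exact Set.subset_biUnion_of_mem (u := fun b => closedBall (x b) (r b))
      (Finset.mem_coe.1 (hu (Finset.mem_coe.2 hm)))
  have h5 : ∀ b, volume (closedBall (x b) (5 * r b)) =
      ENNReal.ofReal (5 ^ n) * volume (closedBall (x b) (r b)) := by
    intro b
    have := hr b
    rw [Real.volume_pi_closedBall _ (by positivity), Real.volume_pi_closedBall _ (by positivity),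
      ← ENNReal.ofReal_mul (by positivity), Fintype.card_fin, ← mul_pow]
    congr 2; ring
  calc t * volume E ≤ t * ∑ b ∈ u, volume (closedBall (x b) (5 * r b)) := by
        gcongr; exact (measure_mono h1).trans (measure_biUnion_finset_le _ _)
    _ = ENNReal.ofReal (5 ^ n) * ∑ b ∈ u, t * volume (closedBall (x b) (r b)) := by
        simp only [h5, ← Finset.mul_sum]; ring
    _ ≤ ENNReal.ofReal (5 ^ n) * ∑ b ∈ u, ∫⁻ z in closedBall (x b) (r b), g z := by
        gcongr with b hb
        refine le_trans ?_ (hA b)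
        gcongr
        exact (hu' b hb).2.le
    _ = ENNReal.ofReal (5 ^ n) * ∫⁻ z in ⋃ b ∈ u, closedBall (x b) (r b), g z := by
        rw [lintegral_biUnion_finset hd (fun b _ => measurableSet_closedBall)]
    _ ≤ _ := by gcongr

lemma aux_fin {n : ℕ} (S : Finset ℕ) (x : ℕ → (Fin n → ℝ)) (r : ℕ → ℝ)
    (a : ℕ → ℝ≥0∞) (ha : ∀ m ∈ S, a m ≠ ∞) (p : ℝ) (hp : 0 < p) :
    ∫⁻ z, (∑ m ∈ S, a m * (closedBall (x m) (r m)).indicator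
            (1 : (Fin n → ℝ) → ℝ≥0∞) z) ^ p ≠ ∞ := by
  set B := ⋃ m ∈ S, closedBall (x m) (r m) with hB
  have hBm : MeasurableSet B := Finset.measurableSet_biUnion _ fun b _ => measurableSet_closedBall
  have hBf : volume B ≠ ∞ := by
    refine ne_of_lt ((measure_biUnion_finset_le _ _).trans_lt ?_)
    exact ENNReal.sum_lt_top.2 fun m _ => measure_closedBall_lt_top
  have : ∀ z, (∑ m ∈ S, a m * (closedBall (x m) (r m)).indicator
            (1 : (Fin n → ℝ) → ℝ≥0∞) z) ^ p ≤ B.indicator (fun _ => (∑ m ∈ S, a m) ^ p) z := by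
    intro z
    by_cases hz : z ∈ B
    · rw [Set.indicator_of_mem hz]
      gcongr with m hm
      refine mul_le_of_le_one_right' ?_
      exact Set.indicator_le_self' (by simp) z
    · rw [Set.indicator_of_notMem hz, Finset.sum_eq_zero, ENNReal.zero_rpow_of_pos hp]
      intro m hm
      rw [Set.indicator_of_notMem, mul_zero]
      intro h; exact hz (Set.mem_biUnion hm h)
  refine ne_of_lt ((lintegral_mono this).trans_lt ?_)
  rw [lintegral_indicator_const hBm]
  exact ENNReal.mul_lt_top (ENNReal.rpow_lt_top_of_nonneg hp.le
    (ENNReal.sum_ne_top.2 ha)) hBf.lt_top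

lemma aux_finite {n : ℕ} {p q : ℝ} (h : p.HolderConjugate q) (σ : ℝ)
    (S : Finset ℕ) (x y : ℕ → (Fin n → ℝ)) (r s : ℕ → ℝ)
    (hr : ∀ m, 0 < r m)
    (hsub : ∀ m, closedBall (y m) (s m) ⊆ closedBall (x m) (r m))
    (hvol : ∀ m, volume (closedBall (x m) (r m)) ≤
          ENNReal.ofReal (σ ^ n) * volume (closedBall (y m) (s m)))
    (a : ℕ → ℝ≥0∞) (ha : ∀ m ∈ S, a m ≠ ∞) :
    (∫⁻ z, (∑ m ∈ S, a m * (closedBall (x m) (r m)).indicator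
            (1 : (Fin n → ℝ) → ℝ≥0∞) z) ^ p) ^ (1 / p)
    ≤ (ENNReal.ofReal (σ ^ n) * (ENNReal.ofReal (q / (q - 1)) * ENNReal.ofReal (5 ^ n))) *
      (∫⁻ z, (∑ m ∈ S, a m * (closedBall (y m) (s m)).indicator
            (1 : (Fin n → ℝ) → ℝ≥0∞) z) ^ p) ^ (1 / p) := by
  have hmI : ∀ (c : ℕ → (Fin n → ℝ)) (d : ℕ → ℝ) (b : ℕ → ℝ≥0∞) (m : ℕ), Measurable fun z =>
      b m * (closedBall (c m) (d m)).indicator (1 : (Fin n → ℝ) → ℝ≥0∞) z := fun c d b m =>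
    (measurable_one.indicator measurableSet_closedBall).const_mul _
  have hF0 := aux_fin S x r a ha p h.pos
  set F : (Fin n → ℝ) → ℝ≥0∞ := fun z => ∑ m ∈ S, a m * (closedBall (x m) (r m)).indicator
            (1 : (Fin n → ℝ) → ℝ≥0∞) z with hF
  set G : (Fin n → ℝ) → ℝ≥0∞ := fun z => ∑ m ∈ S, a m * (closedBall (y m) (s m)).indicator
            (1 : (Fin n → ℝ) → ℝ≥0∞) z with hG
  change ∫⁻ z, F z ^ p ≠ ∞ at hF0
  change (∫⁻ z, F z ^ p) ^ (1 / p) ≤ _ * (∫⁻ z, G z ^ p) ^ (1 / p)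
  have hFm : Measurable F := Finset.measurable_sum _ fun m _ => hmI x r a m
  have hGm : Measurable G := Finset.measurable_sum _ fun m _ => hmI y s a m
  set g : (Fin n → ℝ) → ℝ≥0∞ := fun z => F z ^ (p - 1) with hg
  have hgm : Measurable g := hFm.pow_const _
  have hgq : ∀ z, g z ^ q = F z ^ p := fun z => by
    simp only [hg, ← ENNReal.rpow_mul, h.sub_one_mul_conj]
  have hV0 : ∀ m, volume (closedBall (x m) (r m)) ≠ 0 := fun m =>
    (measure_closedBall_pos volume _ (hr m)).ne'
  have hVt : ∀ m, volume (closedBall (x m) (r m)) ≠ ∞ := fun m => measure_closedBall_lt_top.ne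
  -- local integrability of g
  have hgi : ∀ m, ∫⁻ z in closedBall (x m) (r m), g z ≠ ∞ := by
    intro m
    have hle : ∀ z, g z ≤ (∑ m ∈ S, a m) ^ (p - 1) := by
      intro z
      refine ENNReal.rpow_le_rpow ?_ h.sub_one_pos.le
      refine Finset.sum_le_sum fun m _ => mul_le_of_le_one_right' ?_
      exact Set.indicator_le_self' (by simp) z
    refine ne_of_lt ((lintegral_mono hle).trans_lt ?_)
    rw [setLIntegral_const]
    exact ENNReal.mul_lt_top (ENNReal.rpow_lt_top_of_nonneg h.sub_one_pos.le
      (ENNReal.sum_ne_top.2 ha)) (hVt m).lt_top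
  set A : ℕ → ℝ≥0∞ := fun m => (∫⁻ z in closedBall (x m) (r m), g z) /
    volume (closedBall (x m) (r m)) with hA
  have hAfin : ∀ m, A m ≠ ∞ := fun m => ENNReal.div_ne_top (hgi m) (hV0 m)
  have hAV : ∀ m, A m * volume (closedBall (x m) (r m)) = ∫⁻ z in closedBall (x m) (r m), g z :=
    fun m => ENNReal.div_mul_cancel (hV0 m) (hVt m)
  set N : (Fin n → ℝ) → ℝ≥0∞ := fun z => S.sup fun m => A m * (closedBall (x m) (r m)).indicator
            (1 : (Fin n → ℝ) → ℝ≥0∞) z with hN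
  have hNm : Measurable N := by
    have : N = fun z => ⨆ m ∈ S, A m * (closedBall (x m) (r m)).indicator
            (1 : (Fin n → ℝ) → ℝ≥0∞) z := by
      ext z; simp only [hN, Finset.sup_eq_iSup]
    rw [this]
    exact Measurable.iSup fun m => Measurable.iSup fun _ => hmI x r A m
  have hNle : ∀ z, N z ≤ ∑ m ∈ S, A m * (closedBall (x m) (r m)).indicator
            (1 : (Fin n → ℝ) → ℝ≥0∞) z := fun z =>
    Finset.sup_le fun m hm => Finset.single_le_sum (f := fun m => A m *
      (closedBall (x m) (r m)).indicator (1 : (Fin n → ℝ) → ℝ≥0∞) z) (fun _ _ => zero_le) hm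
  have hNfin : ∀ z, N z ≠ ∞ := fun z => ne_of_lt ((hNle z).trans_lt (ENNReal.sum_lt_top.2
    fun m _ => ENNReal.mul_lt_top (hAfin m).lt_top (lt_of_le_of_lt
      (Set.indicator_le_self' (by simp) z) ENNReal.one_lt_top)))
  have hNq : ∫⁻ z, N z ^ q ≠ ∞ := by
    refine ne_of_lt (lt_of_le_of_lt (lintegral_mono fun z => ?_)
      (aux_fin S x r A (fun m _ => hAfin m) q h.symm.pos).lt_top)
    exact ENNReal.rpow_le_rpow (hNle z) h.symm.nonneg
  have hset : ∀ t : ℝ≥0∞, {z | t < N z} =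
      ⋃ m ∈ S.filter (fun m => t < A m), closedBall (x m) (r m) := by
    intro t
    ext z
    simp only [hN, Set.mem_setOf_eq, Finset.lt_sup_iff, Set.mem_iUnion, Finset.mem_filter]
    constructor
    · rintro ⟨m, hm, hlt⟩
      by_cases hz : z ∈ closedBall (x m) (r m)
      · rw [Set.indicator_of_mem hz] at hlt
        exact ⟨m, ⟨hm, by simpa using hlt⟩, hz⟩
      · rw [Set.indicator_of_notMem hz] at hlt
        simp at hlt
    · rintro ⟨m, ⟨hm, hlt⟩, hz⟩
      refine ⟨m, hm, ?_⟩
      rw [Set.indicator_of_mem hz]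
      simpa using hlt
  have hmax := aux_doob volume N g hNm hgm hNfin h (ENNReal.ofReal (5 ^ n)) ENNReal.ofReal_ne_top
    (fun t _ => aux_weak S x r hr A g (fun m => (hAV m).le) _ _ (hset _)) hNq
  simp only [hgq] at hmax
  have hkey : ∀ m ∈ S, ∫⁻ z in closedBall (x m) (r m), g z ≤
      ENNReal.ofReal (σ ^ n) * ∫⁻ z in closedBall (y m) (s m), N z := by
    intro m hm
    rw [← hAV m]
    calc A m * volume (closedBall (x m) (r m))
        ≤ A m * (ENNReal.ofReal (σ ^ n) * volume (closedBall (y m) (s m))) := by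
          gcongr; exact hvol m
      _ = ENNReal.ofReal (σ ^ n) * ∫⁻ z in closedBall (y m) (s m), A m := by
          rw [setLIntegral_const]; ring
      _ ≤ _ := by
          refine mul_le_mul' le_rfl (setLIntegral_mono' measurableSet_closedBall fun z hz => ?_)
          have := Finset.le_sup (f := fun m => A m * (closedBall (x m) (r m)).indicator
            (1 : (Fin n → ℝ) → ℝ≥0∞) z) hm
          simpa [Set.indicator_of_mem (hsub m hz)] using this
  have hexp : ∀ (c : ℕ → (Fin n → ℝ)) (d : ℕ → ℝ) (f : (Fin n → ℝ) → ℝ≥0∞), Measurable f →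
      ∫⁻ z, (∑ m ∈ S, a m * (closedBall (c m) (d m)).indicator
            (1 : (Fin n → ℝ) → ℝ≥0∞) z) * f z =
      ∑ m ∈ S, a m * ∫⁻ z in closedBall (c m) (d m), f z := by
    intro c d f hf
    simp only [Finset.sum_mul]
    rw [lintegral_finsetSum S (f := fun m z => a m * (closedBall (c m) (d m)).indicator
      (1 : (Fin n → ℝ) → ℝ≥0∞) z * f z) fun m _ => (hmI c d a m).mul hf]
    refine Finset.sum_congr rfl fun m _ => ?_
    simp only [mul_assoc]
    rw [lintegral_const_mul (f := fun z => (closedBall (c m) (d m)).indicator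
        (1 : (Fin n → ℝ) → ℝ≥0∞) z * f z) _
        ((measurable_one.indicator measurableSet_closedBall).mul hf),
      ← lintegral_indicator measurableSet_closedBall]
    congr 1
    refine lintegral_congr fun z => ?_
    by_cases hz : z ∈ closedBall (c m) (d m) <;> simp [hz]
  apply aux_absorb h hF0
  calc ∫⁻ z, F z ^ p = ∫⁻ z, F z * g z := by
        refine lintegral_congr fun z => ?_
        have := ENNReal.rpow_add_of_nonneg (x := F z) 1 (p - 1) zero_le_one h.sub_one_pos.le
        simpa [hg] using this
    _ = ∑ m ∈ S, a m * ∫⁻ z in closedBall (x m) (r m), g z := hexp x r g hgm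
    _ ≤ ∑ m ∈ S, a m * (ENNReal.ofReal (σ ^ n) * ∫⁻ z in closedBall (y m) (s m), N z) := by
        gcongr with m hm; exact hkey m hm
    _ = ENNReal.ofReal (σ ^ n) * ∫⁻ z, (G * N) z := by
        simp only [Pi.mul_apply]
        rw [hexp y s N hNm, Finset.mul_sum]
        exact Finset.sum_congr rfl fun m _ => by ring
    _ ≤ ENNReal.ofReal (σ ^ n) * ((∫⁻ z, G z ^ p) ^ (1 / p) * (∫⁻ z, N z ^ q) ^ (1 / q)) := by
        gcongr
        exact ENNReal.lintegral_mul_le_Lp_mul_Lq volume h hGm.aemeasurable hNm.aemeasurable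
    _ ≤ ENNReal.ofReal (σ ^ n) * ((∫⁻ z, G z ^ p) ^ (1 / p) *
          ((ENNReal.ofReal (q / (q - 1)) * ENNReal.ofReal (5 ^ n)) *
            (∫⁻ z, F z ^ p) ^ (1 / q))) := by
        gcongr
    _ = _ := by ring

/-- Let `1 < p < ∞` and let `{Q_m}` be a locally finite family of cubes (closed sup-norm
balls) in `ℝⁿ` with subcubes `R_m ⊆ Q_m` satisfying `|Q_m| ≤ σ^n |R_m|` for a fixed `σ ≥ 1`.
Then for all nonnegative scalars `a_m`,
`‖∑_m a_m χ_{Q_m}‖_{L^p} ≤ c(n,p,σ) ‖∑_m a_m χ_{R_m}‖_{L^p}`. -/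
theorem stmt_7 (n : ℕ) (p : ℝ) (hp : 1 < p) (σ : ℝ) (hσ : 1 ≤ σ) :
    ∃ c : ℝ≥0∞, c ≠ ∞ ∧
      ∀ (x y : ℕ → (Fin n → ℝ)) (r s : ℕ → ℝ),
        (∀ m, 0 < r m) → (∀ m, 0 < s m) →
        LocallyFinite (fun m => closedBall (x m) (r m)) →
        (∀ m, closedBall (y m) (s m) ⊆ closedBall (x m) (r m)) →
        (∀ m, volume (closedBall (x m) (r m)) ≤
          ENNReal.ofReal (σ ^ n) * volume (closedBall (y m) (s m))) →
        ∀ a : ℕ → ℝ≥0∞,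
          (∫⁻ z, (∑' m, a m * (closedBall (x m) (r m)).indicator
            (1 : (Fin n → ℝ) → ℝ≥0∞) z) ^ p) ^ (1 / p)
          ≤ c * (∫⁻ z, (∑' m, a m * (closedBall (y m) (s m)).indicator
            (1 : (Fin n → ℝ) → ℝ≥0∞) z) ^ p) ^ (1 / p) := by
  have h := Real.HolderConjugate.conjExponent hp
  set q := p.conjExponent
  set K := ENNReal.ofReal (σ ^ n) * (ENNReal.ofReal (q / (q - 1)) * ENNReal.ofReal (5 ^ n)) with hK
  have hKt : K ≠ ∞ := by finiteness
  refine ⟨K + 1, by finiteness, ?_⟩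
  intro x y r s hr hs _ hsub hvol a
  have hp0 : 0 < p := h.pos
  have hmI : ∀ (c : ℕ → (Fin n → ℝ)) (d : ℕ → ℝ) (m : ℕ), Measurable fun z =>
      a m * (closedBall (c m) (d m)).indicator (1 : (Fin n → ℝ) → ℝ≥0∞) z := fun c d m =>
    (measurable_one.indicator measurableSet_closedBall).const_mul _
  by_cases ha : ∃ m, a m = ∞
  · obtain ⟨m, hm⟩ := ha
    have hI : ∫⁻ z, (∑' m, a m * (closedBall (y m) (s m)).indicator
            (1 : (Fin n → ℝ) → ℝ≥0∞) z) ^ p = ∞ := by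
      rw [eq_top_iff]
      calc ∞ = ∫⁻ z in closedBall (y m) (s m), ∞ := by
            rw [setLIntegral_const, ENNReal.top_mul (measure_closedBall_pos volume _ (hs m)).ne']
        _ ≤ ∫⁻ z in closedBall (y m) (s m), (∑' m, a m * (closedBall (y m) (s m)).indicator
            (1 : (Fin n → ℝ) → ℝ≥0∞) z) ^ p := by
            refine setLIntegral_mono' measurableSet_closedBall fun z hz => ?_
            have h1 := ENNReal.le_tsum (f := fun m => a m * (closedBall (y m) (s m)).indicator
              (1 : (Fin n → ℝ) → ℝ≥0∞) z) m
            simp only [hm, Set.indicator_of_mem hz, Pi.one_apply, mul_one, top_le_iff] at h1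
            rw [h1, ENNReal.top_rpow_of_pos hp0]
        _ ≤ _ := setLIntegral_le_lintegral _ _
    rw [hI, ENNReal.top_rpow_of_pos h.one_div_pos, ENNReal.mul_top (by simp)]
    exact le_top
  · push Not at ha
    have hsup : ∫⁻ z, (∑' m, a m * (closedBall (x m) (r m)).indicator
            (1 : (Fin n → ℝ) → ℝ≥0∞) z) ^ p = ⨆ k, ∫⁻ z, (∑ m ∈ Finset.range k,
            a m * (closedBall (x m) (r m)).indicator (1 : (Fin n → ℝ) → ℝ≥0∞) z) ^ p := by
      rw [← lintegral_iSup]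
      · refine lintegral_congr fun z => ?_
        rw [ENNReal.tsum_eq_iSup_nat]
        exact (ENNReal.orderIsoRpow p hp0).map_iSup _
      · exact fun k => (Finset.measurable_sum _ fun m _ => hmI x r m).pow_const _
      · intro i j hij z
        refine ENNReal.rpow_le_rpow ?_ hp0.le
        exact Finset.sum_le_sum_of_subset (Finset.range_mono hij)
    rw [one_div, ENNReal.rpow_inv_le_iff hp0, hsup]
    refine iSup_le fun k => ?_
    rw [← ENNReal.rpow_inv_le_iff hp0, ← one_div]
    refine (aux_finite h σ (Finset.range k) x y r s hr hsub hvol a fun m _ => ha m).trans ?_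
    have h1 := h.one_div_nonneg
    refine mul_le_mul' le_self_add (ENNReal.rpow_le_rpow (lintegral_mono fun z => ?_) h1)
    exact ENNReal.rpow_le_rpow (ENNReal.sum_le_tsum _) hp0.le
end

section
/- Let S be a d-set in ℝ^n with n−1<d≤n, R>0, and let cubes Q = Q(x_Q,r_Q) and Q' = Q(x_{Q'},r_{Q'}) satisfy x_{Q'} ∈ S, Q' ⊂ Q, and 0 < r_Q ≤ R r_{Q'} ≤ R². Then for every polynomial p of degree at most k and all 1 ≤ u,r ≤ ∞: ( |Q|^{-1} ∫_Q |p|^r dx )^{1/r} ≤ C ( H^d(Q'∩S)^{-1} ∫_{Q'∩S} |p|^u dH^d )^{1/u}, with C depending on S, R, n, u, r, k. -/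
open Metric MeasureTheory
open scoped ENNReal

/-- Functions `ℝⁿ → ℝ` given by polynomials of degree at most `k`. -/
def degLE (n k : ℕ) : Set ((Fin n → ℝ) → ℝ) :=
  {P | ∃ q : MvPolynomial (Fin n) ℝ, q.totalDegree ≤ k ∧ ∀ x, P x = MvPolynomial.eval x q}
open Filter Topology Set

namespace Remez

/-- The regular part of a level set has dimension at most `m`. -/
lemma dimH_regular (m : ℕ) (f : (Fin (m+1) → ℝ) → ℝ) (f' : (Fin (m+1) → ℝ) → ((Fin (m+1) → ℝ) →L[ℝ] ℝ))
    (hf : ∀ x, HasStrictFDerivAt f (f' x) x) (i : Fin (m+1)) :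
    dimH {x | f x = 0 ∧ f' x (Pi.single i 1) ≠ 0} ≤ m := by
  by_contra! hlt
  obtain ⟨x, hx, hxt⟩ := exists_mem_nhdsWithin_lt_dimH_of_lt_dimH hlt
  set s := {x | f x = 0 ∧ f' x (Pi.single i 1) ≠ 0} with hs
  set lam : ℝ := |f' x (Pi.single i 1)| with hlam
  have hl : 0 < lam := abs_pos.2 hx.2
  obtain ⟨U, hU, hUa⟩ := (hf x).approximates_deriv_on_nhds (c := (lam/2).toNNReal)
    (Or.inr (by simpa using hl))
  have ht : s ∩ U ∈ 𝓝[s] x := inter_mem self_mem_nhdsWithin (mem_nhdsWithin_of_mem_nhds hU)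
  refine absurd (hxt _ ht) (not_lt.2 ?_)
  set p : (Fin (m+1) → ℝ) → (Fin m → ℝ) := fun y j => y (i.succAbove j) with hp
  set K : ℝ := 2 + 2 * ‖f' x‖ / lam with hK
  have hK0 : 0 ≤ K := by positivity
  have key : ∀ y ∈ s ∩ U, ∀ z ∈ s ∩ U, dist y z ≤ K * dist (p y) (p z) := by
    intro y hy z hz
    have h1 := hUa y hy.2 z hz.2
    rw [hy.1.1, hz.1.1] at h1
    set v := y - z with hv
    have hpv : dist (p y) (p z) = ‖p v‖ := by
      rw [dist_eq_norm]; rfl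
    rw [dist_eq_norm, hpv]
    set w := v - v i • (Pi.single i 1 : Fin (m+1) → ℝ) with hw
    have hvj : ∀ j, j ≠ i → |v j| ≤ ‖p v‖ := by
      intro j hj
      obtain ⟨j', rfl⟩ := Fin.exists_succAbove_eq hj
      exact norm_le_pi_norm (p v) j'
    have hwn : ‖w‖ ≤ ‖p v‖ := by
      refine (pi_norm_le_iff_of_nonneg (norm_nonneg _)).2 fun j => ?_
      by_cases hj : j = i
      · subst hj; simp [hw]
      · have : w j = v j := by simp [hw, hj]
        rw [this]; exact hvj j hj
    have hvn : ‖v‖ ≤ |v i| + ‖p v‖ := by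
      refine (pi_norm_le_iff_of_nonneg (by positivity)).2 fun j => ?_
      by_cases hj : j = i
      · subst hj; rw [Real.norm_eq_abs]; linarith [norm_nonneg (p v)]
      · rw [Real.norm_eq_abs]; linarith [hvj j hj, abs_nonneg (v i)]
    have h2 : f' x v = v i * f' x (Pi.single i 1) + f' x w := by
      have : v = v i • (Pi.single i 1 : Fin (m+1) → ℝ) + w := by rw [hw]; abel
      conv_lhs => rw [this]
      rw [map_add, map_smul, smul_eq_mul]
    have h3 : |f' x w| ≤ ‖f' x‖ * ‖p v‖ :=
      ((f' x).le_opNorm w).trans (by gcongr)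
    have h4 : |f' x v| ≤ lam / 2 * ‖v‖ := by
      have := h1
      simp only [sub_self, zero_sub, norm_neg, Real.norm_eq_abs, Real.coe_toNNReal _ (half_pos hl).le] at this
      exact this
    have h5 : |v i| * lam ≤ |f' x v| + |f' x w| := by
      rw [hlam, ← abs_mul]
      have : v i * f' x (Pi.single i 1) = f' x v - f' x w := by rw [h2]; ring
      rw [this]; exact abs_sub _ _
    have h6 : |v i| * lam ≤ (lam + 2 * ‖f' x‖) * ‖p v‖ := by nlinarith
    have h7 : |v i| ≤ (1 + 2 * ‖f' x‖ / lam) * ‖p v‖ := by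
      have : (1 + 2 * ‖f' x‖ / lam) * ‖p v‖ = ((lam + 2 * ‖f' x‖) * ‖p v‖) / lam := by
        field_simp
      rw [this, le_div_iff₀ hl]; exact h6
    rw [hK]; nlinarith
  have hanti : AntilipschitzWith ⟨K, hK0⟩ (fun y : ↥(s ∩ U) => p y) :=
    AntilipschitzWith.of_le_mul_dist fun y z => key y y.2 z z.2
  have h8 := hanti.le_dimH_image univ
  have h9 : dimH (univ : Set ↥(s ∩ U)) = dimH (s ∩ U) := by
    rw [← (isometry_subtype_coe (s := s ∩ U)).dimH_image univ]; simp
  rw [← h9]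
  refine h8.trans ((dimH_mono (subset_univ _)).trans ?_)
  rw [Real.dimH_univ_pi_fin]

lemma hasStrictFDerivAt_eval {n : ℕ} (p : MvPolynomial (Fin n) ℝ) (x : Fin n → ℝ) :
    HasStrictFDerivAt (fun x => MvPolynomial.eval x p)
      (∑ j, MvPolynomial.eval x (MvPolynomial.pderiv j p) •
        (ContinuousLinearMap.proj j : (Fin n → ℝ) →L[ℝ] ℝ)) x := by
  induction p using MvPolynomial.induction_on with
  | C a =>
    simp only [MvPolynomial.eval_C, MvPolynomial.pderiv_C, map_zero, zero_smul, Finset.sum_const_zero]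
    exact hasStrictFDerivAt_const a x
  | add p q hp hq =>
    simp only [map_add, add_smul, Finset.sum_add_distrib]
    exact hp.add hq
  | mul_X p i hp =>
    have h := hp.mul (ContinuousLinearMap.hasStrictFDerivAt (x := x)
      (ContinuousLinearMap.proj i : (Fin n → ℝ) →L[ℝ] ℝ))
    simp only [map_mul, MvPolynomial.eval_X]
    refine h.congr_fderiv ?_
    ext v
    simp only [MvPolynomial.pderiv_mul, MvPolynomial.pderiv_X, map_add, map_mul, MvPolynomial.eval_X,
      add_smul, Finset.sum_add_distrib, Pi.single_apply]
    simp [Finset.mul_sum, apply_ite (MvPolynomial.eval x)]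
    rw [add_comm]
    congr 1
    refine Finset.sum_congr rfl fun j _ => ?_
    ring

lemma dimH_zero (m : ℕ) : ∀ (N : ℕ) (p : MvPolynomial (Fin (m+1)) ℝ), p.totalDegree ≤ N → p ≠ 0 →
    dimH {x | MvPolynomial.eval x p = 0} ≤ m := by
  intro N
  induction N with
  | zero =>
    intro p hp h0
    have := MvPolynomial.totalDegree_eq_zero_iff_eq_C.1 (Nat.le_zero.1 hp)
    have hc : p.coeff 0 ≠ 0 := fun h => h0 (by rw [this, h, map_zero])
    have : {x | MvPolynomial.eval x p = 0} = ∅ := by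
      ext x; rw [this]; simpa using hc
    rw [this]; simp
  | succ N ih =>
    intro p hp h0
    by_cases hex : ∃ i, MvPolynomial.pderiv i p ≠ 0
    · obtain ⟨i, hi⟩ := hex
      have hdeg : (MvPolynomial.pderiv i p).totalDegree ≤ N := by
        refine Finset.sup_le ?_
        intro d hd
        rw [MvPolynomial.mem_support_iff, MvPolynomial.coeff_pderiv] at hd
        have h1 : d + Finsupp.single i 1 ∈ p.support := by
          rw [MvPolynomial.mem_support_iff]
          intro h; apply hd; rw [h]; simp
        have h2 := (MvPolynomial.le_totalDegree h1).trans hp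
        rw [Finsupp.sum_add_index' (by simp) (by simp)] at h2
        simp at h2
        simpa using h2
      have h1 := dimH_regular m (fun x => MvPolynomial.eval x p) _ (hasStrictFDerivAt_eval p) i
      have h2 := ih _ hdeg hi
      refine (dimH_mono ?_).trans ((dimH_union _ _).trans_le (max_le h1 h2))
      intro x hx
      by_cases h : MvPolynomial.eval x (MvPolynomial.pderiv i p) = 0
      · exact Or.inr h
      · refine Or.inl ⟨hx, ?_⟩
        simpa [Pi.single_apply] using h
    · push Not at hex
      refine ih p ?_ h0
      have : p.totalDegree = 0 := by
        by_contra hne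
        apply hne
        rw [← Nat.le_zero]
        refine Finset.sup_le ?_
        intro d hd
        suffices d = 0 by simp [this]
        ext i
        by_contra hdi
        have h1 := congrArg (MvPolynomial.coeff (d - Finsupp.single i 1)) (hex i)
        have hle : Finsupp.single i 1 ≤ d := by
          rw [Finsupp.single_le_iff]; simp at hdi; omega
        rw [MvPolynomial.coeff_pderiv, tsub_add_cancel_of_le hle] at h1
        rw [MvPolynomial.mem_support_iff] at hd
        simp [hd] at h1
        norm_cast at h1
      omega

lemma hausdorff_zero (m : ℕ) (d : ℝ) (hd : (m:ℝ) < d) (p : MvPolynomial (Fin (m+1)) ℝ) (hp : p ≠ 0) :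
    μH[d] {x | MvPolynomial.eval x p = 0} = 0 := by
  have h0 : 0 ≤ d := (Nat.cast_nonneg m).trans hd.le
  lift d to NNReal using h0
  apply hausdorffMeasure_of_dimH_lt
  refine (dimH_zero m _ p le_rfl hp).trans_lt ?_
  have : (m : NNReal) < d := by exact_mod_cast hd
  exact_mod_cast this

lemma cover {X : Type*} [MetricSpace X] [MeasurableSpace X] [BorelSpace X] [Nonempty X]
    (d : ℝ) (hd : 0 < d) (Z : Set X) (hZ : μH[d] Z = 0) (η : ℝ≥0∞) (hη : 0 < η) (ρ₀ : ℝ) (hρ : 0 < ρ₀) :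
    ∃ (y : ℕ → X) (ρ : ℕ → ℝ), (∀ i, 0 < ρ i ∧ ρ i ≤ ρ₀) ∧ Z ⊆ ⋃ i, ball (y i) (ρ i) ∧
      ∑' i, ENNReal.ofReal (ρ i) ^ d ≤ η := by
  rw [Measure.hausdorffMeasure_apply] at hZ
  have h1 : (⨅ (t : ℕ → Set X) (_ : Z ⊆ ⋃ n, t n) (_ : ∀ n, ediam (t n) ≤ ENNReal.ofReal (ρ₀/2)),
          ∑' n, ⨆ _ : (t n).Nonempty, ediam (t n) ^ d) < η / 2 := by
    refine lt_of_le_of_lt ?_ (ENNReal.half_pos hη.ne')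
    rw [← hZ]
    exact le_iSup₂_of_le (ENNReal.ofReal (ρ₀/2)) (by simpa using hρ) le_rfl
  simp only [iInf_lt_iff] at h1
  obtain ⟨t, ht, hdm, hsum⟩ := h1
  obtain ⟨δ, hδ, hδs⟩ := ENNReal.exists_pos_sum_of_countable (ENNReal.half_pos hη.ne').ne' ℕ
  have hch : ∀ i, ∃ (y : X) (ρ : ℝ), 0 < ρ ∧ ρ ≤ ρ₀ ∧ t i ⊆ ball y ρ ∧
      ENNReal.ofReal ρ ^ d ≤ (⨆ _ : (t i).Nonempty, ediam (t i) ^ d) + δ i := by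
    intro i
    set D := ediam (t i) with hD
    have hDt : D ≠ ⊤ := ((hdm i).trans_lt ENNReal.ofReal_lt_top).ne
    have hterm : (⨆ _ : (t i).Nonempty, D ^ d) = D ^ d := by
      rcases (t i).eq_empty_or_nonempty with h | h
      · simp [hD, h, ENNReal.zero_rpow_of_pos hd]
      · simp [h]
    rw [hterm]
    have hDr : D.toReal ≤ ρ₀/2 := ENNReal.toReal_le_of_le_ofReal (by positivity) (hdm i)
    have hcont : Continuous fun ρ : ℝ => ENNReal.ofReal ρ ^ d :=
      ENNReal.continuous_rpow_const.comp ENNReal.continuous_ofReal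
    have hev : ∀ᶠ ρ in 𝓝[>] D.toReal, ENNReal.ofReal ρ ^ d < D ^ d + δ i := by
      refine mem_nhdsWithin_of_mem_nhds (hcont.continuousAt.eventually_lt_const ?_)
      change ENNReal.ofReal D.toReal ^ d < _
      rw [ENNReal.ofReal_toReal hDt]
      refine ENNReal.lt_add_right (ENNReal.rpow_ne_top_of_nonneg hd.le hDt) ?_
      exact_mod_cast (hδ i).ne'
    have hev2 : ∀ᶠ ρ in 𝓝[>] D.toReal, ρ < ρ₀ :=
      mem_nhdsWithin_of_mem_nhds (eventually_lt_nhds (by linarith))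
    obtain ⟨ρ, ⟨hρ1, hρ2⟩, hρ3⟩ := ((hev.and hev2).and self_mem_nhdsWithin).exists
    have hρ3 : D.toReal < ρ := hρ3
    have hpos : 0 < ρ := ENNReal.toReal_nonneg.trans_lt hρ3
    rcases (t i).eq_empty_or_nonempty with h | ⟨y, hy⟩
    · exact ⟨Classical.arbitrary X, ρ, hpos, hρ2.le, by simp [h], hρ1.le⟩
    · refine ⟨y, ρ, hpos, hρ2.le, fun z hz => ?_, hρ1.le⟩
      rw [mem_ball, dist_edist]
      exact (ENNReal.toReal_mono hDt (edist_le_ediam_of_mem hz hy)).trans_lt hρ3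
  choose y ρ h1 h2 h3 h4 using hch
  refine ⟨y, ρ, fun i => ⟨h1 i, h2 i⟩, ht.trans (iUnion_mono h3), ?_⟩
  calc _ ≤ ∑' i, ((⨆ _ : (t i).Nonempty, ediam (t i) ^ d) + δ i) := ENNReal.tsum_le_tsum h4
    _ = _ := ENNReal.tsum_add
    _ ≤ η/2 + η/2 := add_le_add hsum.le hδs.le
    _ = η := ENNReal.add_halves η

/-- Coefficient index. -/
noncomputable def ex {n k : ℕ} (m : Fin n → Fin (k+1)) : Fin n →₀ ℕ :=
  Finsupp.equivFunOnFinite.symm (fun i => (m i : ℕ))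

lemma ex_inj {n k : ℕ} : Function.Injective (ex (n := n) (k := k)) := by
  intro a b h
  have h' := Finsupp.equivFunOnFinite.symm.injective h
  funext i
  exact Fin.ext (congrFun h' i)

/-- The polynomial with given coefficients. -/
noncomputable def toPoly {n k : ℕ} (a : (Fin n → Fin (k+1)) → ℝ) : MvPolynomial (Fin n) ℝ :=
  ∑ m, MvPolynomial.monomial (ex m) (a m)

lemma coeff_toPoly {n k : ℕ} (a : (Fin n → Fin (k+1)) → ℝ) (m) :
    (toPoly a).coeff (ex m) = a m := by
  classical
  rw [toPoly, MvPolynomial.coeff_sum, Finset.sum_eq_single m]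
  · simp
  · intro b _ hb
    rw [MvPolynomial.coeff_monomial, if_neg (fun h => hb (ex_inj h))]
  · simp

lemma toPoly_ne_zero {n k : ℕ} (a : (Fin n → Fin (k+1)) → ℝ) (ha : a ≠ 0) : toPoly a ≠ 0 := by
  intro h
  apply ha
  funext m
  rw [← coeff_toPoly a m, h]; simp

/-- Evaluation. -/
noncomputable def pol {n k : ℕ} (a : (Fin n → Fin (k+1)) → ℝ) (x : Fin n → ℝ) : ℝ :=
  MvPolynomial.eval x (toPoly a)

lemma pol_eq {n k : ℕ} (a : (Fin n → Fin (k+1)) → ℝ) (x : Fin n → ℝ) :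
    pol a x = ∑ m, a m * ∏ i, x i ^ (m i : ℕ) := by
  simp only [pol, toPoly, map_sum, MvPolynomial.eval_monomial]
  refine Finset.sum_congr rfl fun m _ => ?_
  rw [Finsupp.prod_fintype _ _ (by simp)]
  rfl

lemma pol_sub {n k : ℕ} (a b : (Fin n → Fin (k+1)) → ℝ) (x : Fin n → ℝ) :
    pol (a - b) x = pol a x - pol b x := by
  simp [pol_eq, sub_mul]

lemma pol_smul {n k : ℕ} (c : ℝ) (a : (Fin n → Fin (k+1)) → ℝ) (x : Fin n → ℝ) :
    pol (c • a) x = c * pol a x := by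
  simp [pol_eq, Finset.mul_sum, mul_assoc]

lemma continuous_pol {n k : ℕ} (a : (Fin n → Fin (k+1)) → ℝ) : Continuous (pol a) :=
  MvPolynomial.continuous_eval _

lemma pol_bound (n k : ℕ) (L : ℝ) : ∃ M : ℝ, 0 < M ∧ ∀ (a : (Fin n → Fin (k+1)) → ℝ) (x : Fin n → ℝ),
    ‖x‖ ≤ L → |pol a x| ≤ M * ‖a‖ := by
  have hc : Continuous fun x : Fin n → ℝ => ∑ m : Fin n → Fin (k+1), |∏ i, x i ^ (m i : ℕ)| := by
    fun_prop
  obtain ⟨M, hM⟩ := (isCompact_closedBall (0 : Fin n → ℝ) L).exists_bound_of_continuousOn hc.continuousOn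
  refine ⟨max M 1, by positivity, fun a x hx => ?_⟩
  have h1 := hM x (by simpa using hx)
  rw [pol_eq]
  calc _ ≤ ∑ m, |a m * ∏ i, x i ^ (m i : ℕ)| := Finset.abs_sum_le_sum_abs _ _
    _ ≤ ∑ m : Fin n → Fin (k+1), ‖a‖ * |∏ i, x i ^ (m i : ℕ)| := by
        refine Finset.sum_le_sum fun m _ => ?_
        rw [abs_mul]
        gcongr
        exact norm_le_pi_norm a m
    _ = (∑ m : Fin n → Fin (k+1), |∏ i, x i ^ (m i : ℕ)|) * ‖a‖ := by rw [← Finset.mul_sum, mul_comm]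
    _ ≤ _ := by
        gcongr
        exact (le_abs_self _).trans (h1.trans (le_max_left _ _))

lemma exists_coeffs {n k : ℕ} (q : MvPolynomial (Fin n) ℝ) (hq : q.totalDegree ≤ k) :
    ∃ a : (Fin n → Fin (k+1)) → ℝ, ∀ x, MvPolynomial.eval x q = pol a x := by
  classical
  refine ⟨fun m => q.coeff (ex m), fun x => ?_⟩
  rw [pol]
  congr 2
  ext e
  by_cases h : ∃ m : Fin n → Fin (k+1), ex m = e
  · obtain ⟨m, rfl⟩ := h
    rw [coeff_toPoly]
  · rw [toPoly, MvPolynomial.coeff_sum, Finset.sum_eq_zero]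
    · by_contra hne
      apply h
      have hs : e ∈ q.support := by rwa [MvPolynomial.mem_support_iff]
      have h1 := (MvPolynomial.le_totalDegree hs).trans hq
      rw [Finsupp.sum_fintype _ _ (by simp)] at h1
      refine ⟨fun i => ⟨e i, ?_⟩, ?_⟩
      · have := Finset.single_le_sum (f := fun i => e i) (by simp) (Finset.mem_univ i)
        omega
      · ext i; simp [ex]
    · intro m _
      rw [MvPolynomial.coeff_monomial, if_neg (fun hh => h ⟨m, hh⟩)]

lemma exists_coeffs_affine {n k : ℕ} (q : MvPolynomial (Fin n) ℝ) (hq : q.totalDegree ≤ k)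
    (x₀ : Fin n → ℝ) (r : ℝ) :
    ∃ a : (Fin n → Fin (k+1)) → ℝ, ∀ y, MvPolynomial.eval (x₀ + r • y) q = pol a y := by
  set g : Fin n → MvPolynomial (Fin n) ℝ := fun i =>
    MvPolynomial.C (x₀ i) + MvPolynomial.C r * MvPolynomial.X i with hg
  have hgd : ∀ i, (g i).totalDegree ≤ 1 := by
    intro i
    refine (MvPolynomial.totalDegree_add _ _).trans (max_le (by simp) ?_)
    refine (MvPolynomial.totalDegree_mul _ _).trans ?_
    simp
  set q' : MvPolynomial (Fin n) ℝ := ∑ e ∈ q.support, MvPolynomial.C (q.coeff e) * ∏ i, g i ^ (e i)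
  have hq' : q'.totalDegree ≤ k := by
    refine MvPolynomial.totalDegree_finsetSum_le fun e he => ?_
    refine (MvPolynomial.totalDegree_mul _ _).trans ?_
    rw [MvPolynomial.totalDegree_C, zero_add]
    refine (MvPolynomial.totalDegree_finsetProd _ _).trans ?_
    have h1 := (MvPolynomial.le_totalDegree he).trans hq
    rw [Finsupp.sum_fintype _ _ (by simp)] at h1
    refine (Finset.sum_le_sum fun i _ => ?_).trans h1
    refine (MvPolynomial.totalDegree_pow _ _).trans ?_
    nlinarith [hgd i]
  obtain ⟨a, ha⟩ := exists_coeffs q' hq'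
  refine ⟨a, fun y => ?_⟩
  rw [← ha, MvPolynomial.eval_eq']
  simp [q', hg, map_sum, map_prod]

/-- The sublevel set is covered economically. -/
def Good {n k : ℕ} (d : ℝ) (η : ℝ≥0∞) (ρ₀ : ℝ) (a : (Fin n → Fin (k+1)) → ℝ) (ε : ℝ) : Prop :=
  ∃ (y : ℕ → Fin n → ℝ) (ρ : ℕ → ℝ), (∀ i, 0 < ρ i ∧ ρ i ≤ ρ₀) ∧
    {x | ‖x‖ ≤ 1 ∧ |pol a x| < ε} ⊆ ⋃ i, ball (y i) (ρ i) ∧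
      ∑' i, ENNReal.ofReal (ρ i) ^ d ≤ η

lemma Good.mono {n k : ℕ} {d : ℝ} {η : ℝ≥0∞} {ρ₀ : ℝ} {a : (Fin n → Fin (k+1)) → ℝ} {ε ε' : ℝ}
    (h : Good d η ρ₀ a ε) (hε : ε' ≤ ε) : Good d η ρ₀ a ε' := by
  obtain ⟨y, ρ, h1, h2, h3⟩ := h
  exact ⟨y, ρ, h1, fun x hx => h2 ⟨hx.1, hx.2.trans_le hε⟩, h3⟩

lemma exists_good (m k : ℕ) (d : ℝ) (hd : (m:ℝ) < d) (η : ℝ≥0∞) (hη : 0 < η) (ρ₀ : ℝ) (hρ : 0 < ρ₀) :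
    ∃ ε > 0, ∀ a ∈ sphere (0 : (Fin (m+1) → Fin (k+1)) → ℝ) 1, Good d η ρ₀ a ε := by
  have hd0 : 0 < d := (Nat.cast_nonneg m).trans_lt hd
  obtain ⟨M, hM, hMb⟩ := pol_bound (m+1) k 1
  refine IsCompact.induction_on (p := fun s => ∃ ε > (0:ℝ), ∀ a ∈ s, Good d η ρ₀ a ε)
    (isCompact_sphere (0 : (Fin (m+1) → Fin (k+1)) → ℝ) 1) ⟨1, one_pos, by simp⟩ ?_ ?_ ?_
  · rintro s t hst ⟨ε, hε, h⟩
    exact ⟨ε, hε, fun a ha => h a (hst ha)⟩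
  · rintro s t ⟨ε, hε, h⟩ ⟨ε', hε', h'⟩
    refine ⟨min ε ε', lt_min hε hε', ?_⟩
    rintro a (ha | ha)
    · exact (h a ha).mono (min_le_left _ _)
    · exact (h' a ha).mono (min_le_right _ _)
  · intro a ha
    have ha0 : a ≠ 0 := by
      rintro rfl; simp at ha
    have hz := hausdorff_zero m d hd (toPoly a) (toPoly_ne_zero a ha0)
    obtain ⟨y, ρ, h1, h2, h3⟩ := cover d hd0 _ hz η hη ρ₀ hρ
    set K := closedBall (0 : Fin (m+1) → ℝ) 1 \ ⋃ i, ball (y i) (ρ i) with hK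
    have hKc : IsCompact K := (isCompact_closedBall _ _).diff (isOpen_iUnion fun i => isOpen_ball)
    obtain ⟨ε, hε, hKε⟩ := hKc.exists_forall_le' (f := fun x => |pol a x|) (a := 0)
      (continuous_pol a).abs.continuousOn (by
        intro x hx
        refine abs_pos.2 fun h => hx.2 (h2 h))
    refine ⟨ball a (ε / 2 / M), mem_nhdsWithin_of_mem_nhds (ball_mem_nhds a (by positivity)), ε/2, by positivity, ?_⟩
    intro b hb
    refine ⟨y, ρ, h1, ?_, h3⟩
    rintro x ⟨hx1, hx2⟩
    by_contra hx3
    have h4 := hKε x ⟨by simpa using hx1, hx3⟩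
    have h5 := hMb (a - b) x hx1
    rw [pol_sub] at h5
    have h6 : ‖a - b‖ < ε / 2 / M := by rwa [mem_ball, dist_comm, dist_eq_norm] at hb
    rw [lt_div_iff₀ hM] at h6
    have h7 := abs_sub_abs_le_abs_sub (pol a x) (pol b x)
    linarith

lemma meas_lt_top {n : ℕ} {d : ℝ} {S : Set (Fin n → ℝ)} (hScl : IsClosed S)
    {c₂ : ℝ≥0∞} (hc₂ : c₂ ≠ ∞)
    (hreg : ∀ w ∈ S, ∀ r : ℝ, 0 < r → r ≤ 1 →
        μH[d] (closedBall w r ∩ S) ≤ c₂ * ENNReal.ofReal r ^ d) (x : Fin n → ℝ) (r : ℝ) :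
    μH[d] (closedBall x r ∩ S) < ∞ := by
  refine ((isCompact_closedBall x r).inter_right hScl).measure_lt_top_of_nhdsWithin ?_
  intro w hw
  refine ⟨closedBall w 1 ∩ S, ?_, ?_⟩
  · exact inter_mem (mem_nhdsWithin_of_mem_nhds (closedBall_mem_nhds w one_pos))
      (mem_of_superset self_mem_nhdsWithin inter_subset_right)
  · refine (hreg w hw.2 1 one_pos le_rfl).trans_lt ?_
    simpa using hc₂.lt_top

lemma meas_ge {n : ℕ} {d : ℝ} (hd : 0 ≤ d) {S : Set (Fin n → ℝ)} {c₁ : ℝ≥0∞}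
    (hreg : ∀ w ∈ S, ∀ r : ℝ, 0 < r → r ≤ 1 →
      c₁ * ENNReal.ofReal r ^ d ≤ μH[d] (closedBall w r ∩ S)) {R : ℝ} (hR : 1 ≤ R)
    (x : Fin n → ℝ) (hx : x ∈ S) (r : ℝ) (hr : 0 < r) (hrR : r ≤ R) :
    c₁ * ENNReal.ofReal (1 / R) ^ d * ENNReal.ofReal r ^ d ≤ μH[d] (closedBall x r ∩ S) := by
  have hR0 : 0 < R := by linarith
  have h := hreg x hx (r / R) (by positivity) ((div_le_one hR0).2 hrR)
  calc _ = c₁ * ENNReal.ofReal (r / R) ^ d := by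
        rw [mul_assoc, ← ENNReal.mul_rpow_of_nonneg _ _ hd, ← ENNReal.ofReal_mul (by positivity)]
        congr 3; ring
    _ ≤ _ := h
    _ ≤ _ := measure_mono (inter_subset_inter_left _ (closedBall_subset_closedBall (div_le_self hr.le hR)))

lemma meas_pos {n : ℕ} {d : ℝ} {S : Set (Fin n → ℝ)} {c₁ : ℝ≥0∞} (hc₁ : 0 < c₁)
    (hreg : ∀ w ∈ S, ∀ r : ℝ, 0 < r → r ≤ 1 →
      c₁ * ENNReal.ofReal r ^ d ≤ μH[d] (closedBall w r ∩ S))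
    (x : Fin n → ℝ) (hx : x ∈ S) (r : ℝ) (hr : 0 < r) : 0 < μH[d] (closedBall x r ∩ S) := by
  have h := hreg x hx (min r 1) (by positivity) (min_le_right _ _)
  refine lt_of_lt_of_le ?_ (h.trans (measure_mono (inter_subset_inter_left _
    (closedBall_subset_closedBall (min_le_left _ _)))))
  refine ENNReal.mul_pos hc₁.ne' (ENNReal.rpow_pos ?_ ENNReal.ofReal_ne_top).ne'
  rw [ENNReal.ofReal_pos]; positivity

lemma prob {X : Type*} [MeasurableSpace X] (μ : Measure X) (T : Set X) (h0 : 0 < μ T) (ht : μ T < ∞) :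
    IsProbabilityMeasure ((μ T)⁻¹ • μ.restrict T) :=
  ⟨by simp [ENNReal.inv_mul_cancel h0.ne' ht.ne]⟩

lemma half_bound {X : Type*} [MeasurableSpace X] (μ : Measure X) (T : Set X) (hT : MeasurableSet T)
    (h0 : 0 < μ T) (ht : μ T < ∞)
    (P : X → ℝ) (hP : Measurable P) (e : ℝ) (hbad : μ {z ∈ T | |P z| < e} ≤ μ T / 2) :
    ENNReal.ofReal e / 2 ≤ eLpNorm P 1 ((μ T)⁻¹ • μ.restrict T) := by
  rw [eLpNorm_one_eq_lintegral_enorm, lintegral_smul_measure, smul_eq_mul]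
  have h1 := mul_meas_ge_le_lintegral (μ := μ.restrict T) hP.enorm (ENNReal.ofReal e)
  have h2 : μ T / 2 ≤ μ.restrict T {x | ENNReal.ofReal e ≤ ‖P x‖ₑ} := by
    rw [Measure.restrict_apply (measurableSet_le measurable_const hP.enorm)]
    have h3 : μ T ≤ μ ({x | ENNReal.ofReal e ≤ ‖P x‖ₑ} ∩ T) + μ {z ∈ T | |P z| < e} := by
      refine (measure_mono ?_).trans (measure_union_le _ _)
      intro z hz
      by_cases h : |P z| < e
      · exact Or.inr ⟨hz, h⟩
      · refine Or.inl ⟨?_, hz⟩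
        change ENNReal.ofReal e ≤ ‖P z‖ₑ
        rw [Real.enorm_eq_ofReal_abs]
        exact ENNReal.ofReal_le_ofReal (not_lt.1 h)
    have h4 : μ T / 2 + μ T / 2 ≤ μ ({x | ENNReal.ofReal e ≤ ‖P x‖ₑ} ∩ T) + μ T / 2 := by
      rw [ENNReal.add_halves]; exact h3.trans (by gcongr)
    exact (ENNReal.add_le_add_iff_right (ENNReal.div_lt_top ht.ne two_ne_zero).ne).1 h4
  calc ENNReal.ofReal e / 2 = (μ T)⁻¹ * (ENNReal.ofReal e * (μ T / 2)) := by
        rw [ENNReal.div_eq_inv_mul, ENNReal.div_eq_inv_mul]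
        rw [show (μ T)⁻¹ * (ENNReal.ofReal e * (2⁻¹ * μ T))
          = ((μ T)⁻¹ * μ T) * (2⁻¹ * ENNReal.ofReal e) by ring,
          ENNReal.inv_mul_cancel h0.ne' ht.ne, one_mul]
    _ ≤ _ := by gcongr; exact le_trans (by gcongr) h1

lemma bad_le {n : ℕ} {d : ℝ} (hd : 0 ≤ d) {S : Set (Fin n → ℝ)} {c₂ : ℝ≥0∞}
    (hreg : ∀ w ∈ S, ∀ r : ℝ, 0 < r → r ≤ 1 →
      μH[d] (closedBall w r ∩ S) ≤ c₂ * ENNReal.ofReal r ^ d)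
    (x : Fin n → ℝ) (r : ℝ) (hr : 0 < r) (y : ℕ → Fin n → ℝ) (ρ : ℕ → ℝ)
    (hρ : ∀ i, 0 < ρ i ∧ 2 * r * ρ i ≤ 1) (η : ℝ≥0∞) (hη : ∑' i, ENNReal.ofReal (ρ i) ^ d ≤ η)
    (B : Set (Fin n → ℝ)) (hBS : B ⊆ S) (hB : ∀ z ∈ B, ∃ i, r⁻¹ • (z - x) ∈ ball (y i) (ρ i)) :
    μH[d] B ≤ c₂ * ENNReal.ofReal (2 * r) ^ d * η := by
  have h1 : B ⊆ ⋃ i, (ball (x + r • y i) (r * ρ i) ∩ S) := by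
    intro z hz
    obtain ⟨i, hi⟩ := hB z hz
    refine mem_iUnion.2 ⟨i, ?_, hBS hz⟩
    rw [mem_ball, dist_eq_norm] at hi ⊢
    have : z - (x + r • y i) = r • (r⁻¹ • (z - x) - y i) := by
      rw [smul_sub, smul_inv_smul₀ hr.ne']; abel
    rw [this, norm_smul, Real.norm_of_nonneg hr.le]
    gcongr
  have h2 : ∀ i, μH[d] (ball (x + r • y i) (r * ρ i) ∩ S) ≤
      c₂ * ENNReal.ofReal (2 * r) ^ d * ENNReal.ofReal (ρ i) ^ d := by
    intro i
    rcases (ball (x + r • y i) (r * ρ i) ∩ S).eq_empty_or_nonempty with h | ⟨w, hw⟩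
    · simp [h]
    · have hp := (hρ i).1
      calc _ ≤ μH[d] (closedBall w (2 * r * ρ i) ∩ S) := by
            refine measure_mono (inter_subset_inter_left _ fun z hz => ?_)
            have ha := mem_ball.1 hz
            have hb := mem_ball'.1 hw.1
            have := dist_triangle z (x + r • y i) w
            rw [mem_closedBall]; linarith
        _ ≤ _ := hreg w hw.2 _ (by positivity) (hρ i).2
        _ = _ := by
            rw [ENNReal.ofReal_mul (by positivity), ENNReal.mul_rpow_of_nonneg _ _ hd, mul_assoc]
  calc μH[d] B ≤ ∑' i, μH[d] (ball (x + r • y i) (r * ρ i) ∩ S) :=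
        (measure_mono h1).trans (measure_iUnion_le _)
    _ ≤ ∑' i, c₂ * ENNReal.ofReal (2 * r) ^ d * ENNReal.ofReal (ρ i) ^ d := ENNReal.tsum_le_tsum h2
    _ = c₂ * ENNReal.ofReal (2 * r) ^ d * ∑' i, ENNReal.ofReal (ρ i) ^ d := ENNReal.tsum_mul_left
    _ ≤ _ := by gcongr

end Remez

open Remez
/-- Remez-type comparison for a `d`-set `S` with `n - 1 < d ≤ n`: if `Q' ⊆ Q` are cubes with
`x_{Q'} ∈ S` and `0 < r_Q ≤ R r_{Q'} ≤ R²`, then for every polynomial `p` of degree `≤ k` and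
all `1 ≤ u, r ≤ ∞`, the normalized `L^r` mean of `p` over `Q` (Lebesgue measure) is bounded by
`C` times the normalized `L^u` mean of `p` over `Q' ∩ S` (Hausdorff measure `H^d`). -/
theorem stmt_12 (n : ℕ) (d : ℝ) (hd1 : (n : ℝ) - 1 < d) (hdn : d ≤ n)
    (S : Set (Fin n → ℝ)) (hScl : IsClosed S)
    (c₁ c₂ : ℝ≥0∞) (hc₁ : 0 < c₁) (hc₂ : c₂ ≠ ∞)
    (hreg : ∀ w ∈ S, ∀ r : ℝ, 0 < r → r ≤ 1 →
      c₁ * ENNReal.ofReal r ^ d ≤ μH[d] (closedBall w r ∩ S) ∧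
        μH[d] (closedBall w r ∩ S) ≤ c₂ * ENNReal.ofReal r ^ d)
    (R : ℝ) (hR : 0 < R) (k : ℕ) (u r : ℝ≥0∞) (hu : 1 ≤ u) (hr : 1 ≤ r) :
    ∃ C : ℝ≥0∞, C ≠ ∞ ∧
      ∀ (xQ xQ' : Fin n → ℝ) (rQ rQ' : ℝ), xQ' ∈ S →
        closedBall xQ' rQ' ⊆ closedBall xQ rQ →
        0 < rQ → rQ ≤ R * rQ' → R * rQ' ≤ R ^ 2 →
        ∀ P ∈ degLE n k,
          eLpNorm P r ((volume (closedBall xQ rQ))⁻¹ • volume.restrict (closedBall xQ rQ))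
            ≤ C * eLpNorm P u ((μH[d] (closedBall xQ' rQ' ∩ S))⁻¹ •
                μH[d].restrict (closedBall xQ' rQ' ∩ S)) := by
  have hreg1 := fun w hw r h1 h2 => (hreg w hw r h1 h2).1
  have hreg2 := fun w hw r h1 h2 => (hreg w hw r h1 h2).2
  have hvol : ∀ (x : Fin n → ℝ) (s : ℝ), 0 < s → IsProbabilityMeasure
      ((volume (closedBall x s))⁻¹ • volume.restrict (closedBall x s)) := fun x s hs =>
    prob _ _ (measure_closedBall_pos _ _ hs) measure_closedBall_lt_top
  rcases n with _ | m
  · refine ⟨1, ENNReal.one_ne_top, ?_⟩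
    intro xQ xQ' rQ rQ' hxS _ hrQ h1 _ P _
    have hrQ' : 0 < rQ' := pos_of_mul_pos_right (hrQ.trans_le h1) hR.le
    have i1 := hvol xQ rQ hrQ
    have i2 := prob μH[d] _ (meas_pos hc₁ hreg1 xQ' hxS rQ' hrQ') (meas_lt_top hScl hc₂ hreg2 xQ' rQ')
    have hPc : P = fun _ => P 0 := by funext x; congr 1; exact Subsingleton.elim _ _
    rw [hPc, eLpNorm_const _ (by positivity) (IsProbabilityMeasure.ne_zero _),
      eLpNorm_const _ (by positivity) (IsProbabilityMeasure.ne_zero _)]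
    simp
  have hdm : (m : ℝ) < d := by push_cast at hd1; linarith
  have hd0 : 0 ≤ d := (Nat.cast_nonneg m).trans hdm.le
  set R' := max R 1 with hR'
  have hR'1 : 1 ≤ R' := le_max_right _ _
  have hR'0 : 0 < R' := by linarith
  obtain ⟨M, hM, hMb⟩ := pol_bound (m+1) k (2 * R)
  set κ : ℝ≥0∞ := c₁ * ENNReal.ofReal (1 / R') ^ d / 2 with hκ
  have hκ0 : κ ≠ 0 := by
    refine (ENNReal.half_pos ?_).ne'
    refine mul_ne_zero hc₁.ne' (ENNReal.rpow_pos ?_ ENNReal.ofReal_ne_top).ne'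
    rw [ENNReal.ofReal_pos]; positivity
  obtain ⟨η, hη, hηκ⟩ := ENNReal.exists_nnreal_pos_mul_lt (a := c₂ * ENNReal.ofReal 2 ^ d) (b := κ)
    (ENNReal.mul_ne_top hc₂ (ENNReal.rpow_ne_top_of_nonneg hd0 ENNReal.ofReal_ne_top)) hκ0
  obtain ⟨ε, hε, hgood⟩ := exists_good m k d hdm (η : ℝ≥0∞) (by exact_mod_cast hη)
    (1 / (2 * R')) (by positivity)
  refine ⟨ENNReal.ofReal (2 * M / ε), ENNReal.ofReal_ne_top, ?_⟩
  rintro xQ xQ' rQ rQ' hxS hsub hrQ h1 h2 P ⟨q, hq, hPq⟩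
  have hrQ' : 0 < rQ' := pos_of_mul_pos_right (hrQ.trans_le h1) hR.le
  have hrR : rQ' ≤ R := by nlinarith
  have hrR' : rQ' ≤ R' := hrR.trans (le_max_left _ _)
  have i1 := hvol xQ rQ hrQ
  have hT0 := meas_pos hc₁ hreg1 xQ' hxS rQ' hrQ'
  have hTt := meas_lt_top hScl hc₂ hreg2 xQ' rQ'
  have i2 := prob μH[d] _ hT0 hTt
  have hPc : Continuous P := by
    have : P = fun x => MvPolynomial.eval x q := funext hPq
    rw [this]; exact MvPolynomial.continuous_eval _
  obtain ⟨a, ha⟩ := exists_coeffs_affine q hq xQ' rQ'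
  have hPa : ∀ z, P z = pol a (rQ'⁻¹ • (z - xQ')) := by
    intro z
    rw [← ha, hPq, smul_inv_smul₀ hrQ'.ne']; simp
  have hup : eLpNorm P r ((volume (closedBall xQ rQ))⁻¹ • volume.restrict (closedBall xQ rQ))
      ≤ ENNReal.ofReal (M * ‖a‖) := by
    refine (eLpNorm_le_of_ae_bound (C := M * ‖a‖) ?_).trans (by simp)
    refine Measure.ae_smul_measure ?_ _
    refine (ae_restrict_iff' measurableSet_closedBall).2 (Eventually.of_forall fun z hz => ?_)
    rw [hPa, Real.norm_eq_abs]
    apply hMb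
    have hx : xQ' ∈ closedBall xQ rQ := hsub (mem_closedBall_self hrQ'.le)
    have h3 : ‖z - xQ'‖ ≤ 2 * R * rQ' := by
      rw [← dist_eq_norm]
      have := dist_triangle_right z xQ' xQ
      rw [mem_closedBall] at hz hx
      linarith
    rw [norm_smul, norm_inv, Real.norm_of_nonneg hrQ'.le, inv_mul_le_iff₀ hrQ']
    linarith
  refine hup.trans ?_
  by_cases ha0 : a = 0
  · simp [ha0]
  have han : 0 < ‖a‖ := norm_pos_iff.2 ha0
  have hlow : ENNReal.ofReal (ε * ‖a‖) / 2 ≤ eLpNorm P u ((μH[d] (closedBall xQ' rQ' ∩ S))⁻¹ •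
                μH[d].restrict (closedBall xQ' rQ' ∩ S)) := by
    refine le_trans ?_ (eLpNorm_le_eLpNorm_of_exponent_le hu hPc.aestronglyMeasurable)
    refine half_bound _ _ (isClosed_closedBall.inter hScl).measurableSet hT0 hTt P hPc.measurable _ ?_
    obtain ⟨y, ρ, hρ, hcov, hsum⟩ := hgood (‖a‖⁻¹ • a) (by simp [norm_smul, han.ne'])
    have hb := bad_le hd0 hreg2 xQ' rQ' hrQ' y ρ (fun i => ⟨(hρ i).1, ?_⟩) η hsum
      {z ∈ closedBall xQ' rQ' ∩ S | |P z| < ε * ‖a‖} (fun z hz => hz.1.2) ?_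
    · refine hb.trans ?_
      have hge := meas_ge hd0 hreg1 hR'1 xQ' hxS rQ' hrQ' hrR'
      calc c₂ * ENNReal.ofReal (2 * rQ') ^ d * η
          = (η * (c₂ * ENNReal.ofReal 2 ^ d)) * ENNReal.ofReal rQ' ^ d := by
            rw [ENNReal.ofReal_mul (by norm_num), ENNReal.mul_rpow_of_nonneg _ _ hd0]; ring
        _ ≤ κ * ENNReal.ofReal rQ' ^ d := by gcongr
        _ = c₁ * ENNReal.ofReal (1 / R') ^ d * ENNReal.ofReal rQ' ^ d / 2 := by
            rw [hκ, ENNReal.div_eq_inv_mul, ENNReal.div_eq_inv_mul, mul_assoc]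
        _ ≤ _ := by gcongr
    · have h5 := (hρ i).2
      rw [le_div_iff₀ (by positivity)] at h5
      nlinarith [(hρ i).1]
    · rintro z ⟨⟨hz, _⟩, hzP⟩
      have := @hcov (rQ'⁻¹ • (z - xQ')) ⟨?_, ?_⟩
      · simpa using this
      · rw [norm_smul, norm_inv, Real.norm_of_nonneg hrQ'.le, inv_mul_le_iff₀ hrQ', ← dist_eq_norm]
        simpa using hz
      · rw [pol_smul, ← hPa, abs_mul, abs_of_pos (inv_pos.2 han), inv_mul_lt_iff₀ han]
        linarith
  calc ENNReal.ofReal (M * ‖a‖) = ENNReal.ofReal (2 * M / ε) * (ENNReal.ofReal (ε * ‖a‖) / 2) := by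
        rw [show (2:ℝ≥0∞) = ENNReal.ofReal 2 by simp, ← ENNReal.ofReal_div_of_pos (by norm_num),
          ← ENNReal.ofReal_mul (by positivity)]
        congr 1
        field_simp
    _ ≤ _ := by gcongr
end

section
/- Let S be a d-set with n−1<d≤n and Q a cube centered in S with 0<ℓ(Q)≤R. Then for every polynomial p of degree ≤ k and all 1≤u,r≤∞: ( H^d(Q∩S)^{-1} ∫_{Q∩S} |p|^r dH^d )^{1/r} ≤ C ( H^d(Q∩S)^{-1} ∫_{Q∩S} |p|^u dH^d )^{1/u}, with C = C(S,R,n,u,r,k). -/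
open Metric MeasureTheory
open scoped ENNReal

lemma strict_poly {n : ℕ} (q : MvPolynomial (Fin n) ℝ) (x : Fin n → ℝ) :
    HasStrictFDerivAt (fun y : Fin n → ℝ => MvPolynomial.eval y q)
      (∑ i, MvPolynomial.eval x (MvPolynomial.pderiv i q) •
        (ContinuousLinearMap.proj i : (Fin n → ℝ) →L[ℝ] ℝ)) x := by
  induction q using MvPolynomial.induction_on with
  | C a => simpa using hasStrictFDerivAt_const a x
  | add p q hp hq =>
    simp only [map_add, add_smul, Finset.sum_add_distrib]
    exact hp.add hq
  | mul_X p j hp =>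
    have hj : HasStrictFDerivAt (fun y : Fin n → ℝ => y j)
      (ContinuousLinearMap.proj j : (Fin n → ℝ) →L[ℝ] ℝ) x :=
      (ContinuousLinearMap.proj j : (Fin n → ℝ) →L[ℝ] ℝ).hasStrictFDerivAt
    have := hp.mul hj
    simp only [map_mul, MvPolynomial.eval_X]
    convert! this using 1
    ext v
    simp [MvPolynomial.pderiv_mul, add_mul, Finset.sum_add_distrib, MvPolynomial.pderiv_X,
      Pi.single_apply, Finset.mul_sum]
    simp only [apply_ite (MvPolynomial.eval x), map_one, map_zero, mul_ite, ite_mul]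
    simp [mul_comm, mul_left_comm, add_comm]

lemma exists_pderiv {n : ℕ} (q : MvPolynomial (Fin n) ℝ) (h : q.totalDegree ≠ 0) :
    ∃ i, MvPolynomial.pderiv i q ≠ 0 ∧ (MvPolynomial.pderiv i q).totalDegree < q.totalDegree := by
  have hlt : ∀ i, (MvPolynomial.pderiv i q).totalDegree < q.totalDegree := by
    intro i
    rw [MvPolynomial.totalDegree, Finset.sup_lt_iff (Nat.pos_of_ne_zero h)]
    intro m hm
    rw [MvPolynomial.mem_support_iff, MvPolynomial.coeff_pderiv] at hm
    have h1 : m + Finsupp.single i 1 ∈ q.support := by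
      rw [MvPolynomial.mem_support_iff]; exact left_ne_zero_of_mul hm
    have := MvPolynomial.le_totalDegree h1
    rw [Finsupp.sum_add_index' (by simp) (by simp)] at this
    simp at this
    simp [Finsupp.sum] at this ⊢
    omega
  by_contra! hc
  have h0 : ∀ i, MvPolynomial.pderiv i q = 0 := by
    intro i
    by_contra hne
    exact absurd (hlt i) (not_lt.mpr (hc i hne))
  apply h
  rw [MvPolynomial.totalDegree_eq_zero_iff]
  intro m hm i
  by_contra hmi
  have := congrArg (MvPolynomial.coeff (m - Finsupp.single i 1)) (h0 i)
  rw [MvPolynomial.coeff_pderiv, tsub_add_cancel_of_le] at this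
  · rw [MvPolynomial.coeff_zero] at this
    rcases mul_eq_zero.mp this with h | h
    · exact (MvPolynomial.mem_support_iff.mp hm) h
    · have : (0:ℝ) ≤ ((m - Finsupp.single i 1 : Fin n →₀ ℕ) i : ℝ) := by positivity
      linarith
  · simpa [Nat.one_le_iff_ne_zero] using hmi

lemma dimH_level {n : ℕ} (f : (Fin n → ℝ) → ℝ) (f' : (Fin n → ℝ) →L[ℝ] ℝ) (x : Fin n → ℝ)
    (hf : HasStrictFDerivAt f f' x) (hf' : f' ≠ 0) (hx : f x = 0) :
    ∃ N ∈ nhds x, dimH (N ∩ {y | f y = 0}) + 1 ≤ n := by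
  have hr : f'.range = ⊤ := by
    have : (f' : (Fin n → ℝ) →ₗ[ℝ] ℝ) ≠ 0 := fun h => hf' (by ext1 v; exact congrArg (· v) h)
    exact LinearMap.range_eq_top.mpr (LinearMap.surjective this)
  have h1 := hf.to_implicitFunction hr
  obtain ⟨K, s, hs, hK⟩ := h1.exists_lipschitzOnWith
  have h2 := hf.eq_implicitFunction hr
  set e := hf.implicitToOpenPartialHomeomorph f f' hr with he
  have hc : Filter.Tendsto (fun y => (e y).2) (nhds x) (nhds 0) := by
    have h3 : ContinuousAt e x := e.continuousAt
      (hf.mem_implicitToOpenPartialHomeomorph_source hr)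
    have h4 : Filter.Tendsto (fun y => (e y).2) (nhds x) (nhds (e x).2) := h3.snd
    have h5 := hf.implicitToOpenPartialHomeomorph_self hr
    rw [← he] at h5
    rw [h5] at h4
    exact h4
  refine ⟨{y | hf.implicitFunction f f' hr (f y) (e y).2 = y} ∩ {y | (e y).2 ∈ s},
    Filter.inter_mem h2 (hc hs), ?_⟩
  have h6 : dimH ({y | hf.implicitFunction f f' hr (f y) (e y).2 = y} ∩ {y | (e y).2 ∈ s} ∩
      {y | f y = 0}) ≤ dimH s := by
    refine le_trans (dimH_mono ?_) hK.dimH_image_le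
    rintro y ⟨⟨ha, hb⟩, hy⟩
    refine ⟨(e y).2, hb, ?_⟩
    rw [hx]
    rw [Set.mem_ofPred_eq] at hy
    rw [← hy]
    exact ha
  have h7 : dimH s ≤ Module.finrank ℝ f'.ker := by
    rw [← Real.dimH_univ_eq_finrank]
    exact dimH_mono (Set.subset_univ _)
  have h8 := LinearMap.finrank_range_add_finrank_ker (f' : (Fin n → ℝ) →ₗ[ℝ] ℝ)
  have h9 : Module.finrank ℝ f'.range = 1 := by rw [hr]; simp
  simp at h8
  have h10 : Module.finrank ℝ f'.ker + 1 = n := by rw [add_comm, ← h9]; exact h8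
  calc _ ≤ (Module.finrank ℝ f'.ker : ℝ≥0∞) + 1 := by
        gcongr; exact h6.trans h7
    _ = n := by exact_mod_cast h10

lemma dimH_zero {n : ℕ} (m : ℕ) : ∀ (q : MvPolynomial (Fin n) ℝ), q ≠ 0 → q.totalDegree = m →
    dimH {y | MvPolynomial.eval y q = 0} ≤ ((n - 1 : ℕ) : ℝ≥0∞) := by
  induction m using Nat.strong_induction_on with
  | _ m ih =>
  intro q hq hm
  by_cases h0 : q.totalDegree = 0
  · rw [MvPolynomial.totalDegree_eq_zero_iff_eq_C] at h0
    have : {y : Fin n → ℝ | MvPolynomial.eval y q = 0} = ∅ := by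
      ext y
      rw [h0]
      simp
      intro h
      rw [h] at h0
      simp at h0
      exact hq h0
    rw [this]; simp
  · obtain ⟨i, hi, hlt⟩ := exists_pderiv q h0
    have hI := ih _ (hm ▸ hlt) _ hi rfl
    set A := {y : Fin n → ℝ | MvPolynomial.eval y q = 0 ∧
      MvPolynomial.eval y (MvPolynomial.pderiv i q) ≠ 0}
    have hA : dimH A ≤ ((n - 1 : ℕ) : ℝ≥0∞) := by
      by_contra! hlt
      obtain ⟨x, hx, hN⟩ := exists_mem_nhdsWithin_lt_dimH_of_lt_dimH hlt
      obtain ⟨N, hN1, hN2⟩ := dimH_level _ _ x (strict_poly q x) (by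
        intro h
        have := congrArg (fun l => l (Pi.single i 1)) h
        simp [Pi.single_apply] at this
        exact hx.2 this) hx.1
      have h1 := hN (N ∩ A) (Filter.inter_mem (mem_nhdsWithin_of_mem_nhds hN1) self_mem_nhdsWithin)
      have h2 : dimH (N ∩ A) ≤ dimH (N ∩ {y | MvPolynomial.eval y q = 0}) :=
        dimH_mono (Set.inter_subset_inter_right _ fun y hy => hy.1)
      have h3 := h1.trans_le h2
      have h4 : (((n - 1 : ℕ) : ℝ≥0∞)) + 1 < n :=
        lt_of_lt_of_le (ENNReal.add_lt_add_right (by simp) h3) hN2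
      have : n - 1 + 1 < n := by exact_mod_cast h4
      omega
    refine (dimH_mono (t := A ∪ {y | MvPolynomial.eval y (MvPolynomial.pderiv i q) = 0}) ?_).trans ?_
    · intro y hy
      by_cases h : MvPolynomial.eval y (MvPolynomial.pderiv i q) = 0
      · exact Or.inr h
      · exact Or.inl ⟨hy, h⟩
    · rw [dimH_union]; exact max_le hA hI

lemma cover_null {n : ℕ} {d : ℝ} (hd : 0 < d) (Z : Set (Fin n → ℝ)) (hZ : μH[d] Z = 0)
    {η : ℝ≥0∞} (hη : η ≠ 0) {ρ₀ : ℝ} (hρ₀ : 0 < ρ₀) :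
    ∃ (c : ℕ → Fin n → ℝ) (ρ : ℕ → ℝ), (∀ i, 0 < ρ i) ∧ (∀ i, ρ i ≤ ρ₀) ∧
      Z ⊆ (⋃ i, ball (c i) (ρ i)) ∧ ∑' i, ENNReal.ofReal (ρ i) ^ d ≤ η := by
  have h2d : (2 : ℝ≥0∞) ^ d ≠ 0 := by simp
  have h2dtop : (2 : ℝ≥0∞) ^ d ≠ ∞ := by simp [hd.le]
  set η' : ℝ≥0∞ := η / 2 ^ d / 2 with hη'def
  have hη'0 : η' ≠ 0 := by
    simp [hη'def, ENNReal.div_eq_zero_iff, hη, h2dtop]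
  rw [Measure.hausdorffMeasure_apply] at hZ
  have hZ1 := (le_of_eq hZ)
  simp only [iSup_le_iff] at hZ1
  have hZ2 := (hZ1 (ENNReal.ofReal (ρ₀ / 4)) (by simpa using hρ₀)).trans_lt
    (pos_iff_ne_zero.mpr hη'0)
  simp only [iInf_lt_iff] at hZ2
  obtain ⟨t, ht1, ht2, ht3⟩ := hZ2
  obtain ⟨ε, hε, hεs⟩ := ENNReal.exists_pos_sum_of_countable hη'0 ℕ
  have key : ∀ i, ∃ (c : Fin n → ℝ) (ρ : ℝ), 0 < ρ ∧ ρ ≤ ρ₀ ∧ t i ⊆ ball c ρ ∧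
      ENNReal.ofReal ρ ^ d ≤ 2 ^ d * ((⨆ _ : (t i).Nonempty, ediam (t i) ^ d) + ε i) := by
    intro i
    have hdt : ediam (t i) ≠ ∞ := ne_top_of_le_ne_top ENNReal.ofReal_ne_top (ht2 i)
    set D := (ediam (t i)).toReal with hD
    have hDle : D ≤ ρ₀ / 4 := ENNReal.toReal_le_of_le_ofReal (by positivity) (ht2 i)
    have hD0 : 0 ≤ D := ENNReal.toReal_nonneg
    set e : ℝ := min ((ε i : ℝ) ^ (1 / d)) (ρ₀ / 4) with he
    have hεi : (0:ℝ) < ε i := hε i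
    have he0 : 0 < e := lt_min (Real.rpow_pos_of_pos hεi _) (by positivity)
    have he1 : ENNReal.ofReal e ^ d ≤ ε i := by
      calc ENNReal.ofReal e ^ d ≤ ENNReal.ofReal ((ε i : ℝ) ^ (1 / d)) ^ d := by
            gcongr; exact min_le_left _ _
        _ = ε i := by
            rw [ENNReal.ofReal_rpow_of_nonneg (by positivity) hd.le, ← Real.rpow_mul hεi.le]
            simp [hd.ne']
    have hsum : ENNReal.ofReal (2 * max D e) ^ d ≤
        2 ^ d * ((⨆ _ : (t i).Nonempty, ediam (t i) ^ d) + ε i) := by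
      rw [ENNReal.ofReal_mul (by norm_num), ENNReal.mul_rpow_of_nonneg _ _ hd.le]
      simp only [ENNReal.ofReal_ofNat]
      gcongr
      rcases le_total D e with h | h
      · rw [max_eq_right h]
        exact he1.trans le_add_self
      · rw [max_eq_left h]
        have hne : (t i).Nonempty := by
          by_contra hcon
          rw [Set.not_nonempty_iff_eq_empty] at hcon
          simp [hD, hcon] at h
          linarith
        refine le_trans ?_ le_self_add
        rw [hD, ENNReal.ofReal_toReal hdt]
        exact le_iSup (fun _ : (t i).Nonempty => ediam (t i) ^ d) hne
    have hmaxe : e ≤ max D e := le_max_right _ _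
    have hmaxD : D ≤ max D e := le_max_left _ _
    have hmax4 : max D e ≤ ρ₀ / 4 := max_le hDle (min_le_right _ _)
    rcases (t i).eq_empty_or_nonempty with h | ⟨x, hx⟩
    · refine ⟨0, 2 * max D e, by linarith, by linarith, by simp [h], hsum⟩
    · refine ⟨x, 2 * max D e, by linarith, by linarith, ?_, hsum⟩
      intro y hy
      rw [mem_ball]
      have : edist y x ≤ ediam (t i) := edist_le_ediam_of_mem hy hx
      have h2 : dist y x ≤ D := by
        rw [dist_edist]; exact ENNReal.toReal_mono hdt this
      linarith
  choose c ρ h1 h2 h3 h4 using key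
  refine ⟨c, ρ, h1, h2, ht1.trans (Set.iUnion_mono h3), ?_⟩
  calc ∑' i, ENNReal.ofReal (ρ i) ^ d ≤
      ∑' i, 2 ^ d * ((⨆ _ : (t i).Nonempty, ediam (t i) ^ d) + ε i) := ENNReal.tsum_le_tsum h4
    _ = 2 ^ d * ((∑' i, ⨆ _ : (t i).Nonempty, ediam (t i) ^ d) + ∑' i, (ε i : ℝ≥0∞)) := by
      rw [ENNReal.tsum_mul_left, ENNReal.tsum_add]
    _ ≤ 2 ^ d * (η' + η') := by gcongr
    _ = η := by
      rw [hη'def, ENNReal.add_halves, ENNReal.mul_div_cancel h2d h2dtop]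

/-- Probability measures on the unit cube with a Frostman-type growth bound. -/
structure GoodMeas {n : ℕ} (d : ℝ) (A : ℝ≥0∞) (ρ₀ : ℝ) (ν : Measure (Fin n → ℝ)) : Prop where
  prob : ν Set.univ = 1
  supp : ν (closedBall 0 1)ᶜ = 0
  growth : ∀ x ρ, 0 < ρ → ρ ≤ ρ₀ → ν (closedBall x ρ) ≤ A * ENNReal.ofReal ρ ^ d

lemma poly_cont {n : ℕ} (q : MvPolynomial (Fin n) ℝ) :
    Continuous fun x : Fin n → ℝ => MvPolynomial.eval x q := MvPolynomial.continuous_eval q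

lemma local_bound {n : ℕ} {d : ℝ} (hd : 0 < d) (hdn : (n : ℝ) - 1 < d) (hn : n ≠ 0)
    {A : ℝ≥0∞} (hA : A ≠ ∞) {ρ₀ : ℝ} (hρ₀ : 0 < ρ₀)
    (q : MvPolynomial (Fin n) ℝ) (hq : q ≠ 0) :
    ∃ δ : ℝ, 0 < δ ∧ ∀ q' : MvPolynomial (Fin n) ℝ,
      (∀ x ∈ closedBall (0 : Fin n → ℝ) 1,
        |MvPolynomial.eval x q' - MvPolynomial.eval x q| ≤ δ) →
      ∀ ν : Measure (Fin n → ℝ), GoodMeas d A ρ₀ ν →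
        ENNReal.ofReal (δ / 2) ≤ ∫⁻ x, ‖MvPolynomial.eval x q'‖ₑ ∂ν := by
  have hZ : μH[d] {y : Fin n → ℝ | MvPolynomial.eval y q = 0} = 0 := by
    have h1 := dimH_zero _ q hq rfl
    lift d to NNReal using hd.le
    refine hausdorffMeasure_of_dimH_lt (h1.trans_lt ?_)
    have h2 : ((n - 1 : ℕ) : NNReal) < d := by
      rw [← NNReal.coe_lt_coe]
      have : 1 ≤ n := Nat.one_le_iff_ne_zero.mpr hn
      rw [NNReal.coe_natCast, Nat.cast_sub this, Nat.cast_one]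
      exact hdn
    exact_mod_cast h2
  set η : ℝ≥0∞ := (2 * (A + 1))⁻¹ with hη
  have hη0 : η ≠ 0 := by
    rw [hη, ENNReal.inv_ne_zero]
    finiteness
  have hη1 : η ≠ ∞ := by
    rw [hη, ENNReal.inv_ne_top]; simp
  obtain ⟨c, ρ, h1, h2, h3, h4⟩ := cover_null hd _ hZ hη0 hρ₀
  set U := ⋃ i, ball (c i) (ρ i) with hU
  have hUo : IsOpen U := isOpen_iUnion fun i => isOpen_ball
  have hKU : IsCompact (closedBall (0 : Fin n → ℝ) 1 \ U) :=
    (isCompact_closedBall 0 1).diff hUo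
  obtain ⟨m, hm, hmle⟩ : ∃ m : ℝ, 0 < m ∧ ∀ x ∈ closedBall (0 : Fin n → ℝ) 1 \ U,
      m ≤ |MvPolynomial.eval x q| := by
    refine hKU.exists_forall_le' (poly_cont q).abs.continuousOn ?_
    intro x hx
    rw [abs_pos]
    intro h
    exact hx.2 (h3 h)
  refine ⟨m / 2, by positivity, fun q' hq' ν hν => ?_⟩
  have hνU : ν U ≤ 2⁻¹ := by
    calc ν U ≤ ∑' i, ν (ball (c i) (ρ i)) := measure_iUnion_le _
      _ ≤ ∑' i, A * ENNReal.ofReal (ρ i) ^ d := ENNReal.tsum_le_tsum fun i =>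
        (measure_mono ball_subset_closedBall).trans (hν.growth _ _ (h1 i) (h2 i))
      _ = A * ∑' i, ENNReal.ofReal (ρ i) ^ d := ENNReal.tsum_mul_left
      _ ≤ (A + 1) * η := by gcongr; exact le_self_add
      _ = 2⁻¹ := by
        rw [hη, ENNReal.mul_inv (by simp) (by simp), mul_left_comm,
          ENNReal.mul_inv_cancel (by simp) (by finiteness), mul_one]
  have hνK : 2⁻¹ ≤ ν (closedBall (0 : Fin n → ℝ) 1 \ U) := by
    have h5 : (1 : ℝ≥0∞) ≤ ν (closedBall (0 : Fin n → ℝ) 1 \ U) + 2⁻¹ := by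
      calc (1 : ℝ≥0∞) = ν Set.univ := hν.prob.symm
        _ ≤ ν ((closedBall (0 : Fin n → ℝ) 1 \ U) ∪ U ∪ (closedBall 0 1)ᶜ) := by
          apply measure_mono
          intro x _
          by_cases hx : x ∈ U
          · exact Or.inl (Or.inr hx)
          · by_cases hx' : x ∈ closedBall (0 : Fin n → ℝ) 1
            · exact Or.inl (Or.inl ⟨hx', hx⟩)
            · exact Or.inr hx'
        _ ≤ ν (closedBall (0 : Fin n → ℝ) 1 \ U) + ν U + ν (closedBall 0 1)ᶜ :=
          (measure_union_le _ _).trans (by gcongr; exact measure_union_le _ _)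
        _ ≤ _ := by rw [hν.supp, add_zero]; gcongr
    have h6 := tsub_le_iff_right.mpr h5
    rwa [ENNReal.one_sub_inv_two] at h6
  have hms : MeasurableSet (closedBall (0 : Fin n → ℝ) 1 \ U) := hKU.measurableSet
  calc ENNReal.ofReal (m / 2 / 2) = ENNReal.ofReal (m / 2) * 2⁻¹ := by
        rw [ENNReal.ofReal_div_of_pos (by norm_num : (0:ℝ) < 2)]
        simp [div_eq_mul_inv]
    _ ≤ ENNReal.ofReal (m / 2) * ν (closedBall (0 : Fin n → ℝ) 1 \ U) := by gcongr
    _ = ∫⁻ _ in (closedBall (0 : Fin n → ℝ) 1 \ U), ENNReal.ofReal (m / 2) ∂ν := by simp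
    _ ≤ ∫⁻ x in (closedBall (0 : Fin n → ℝ) 1 \ U), ‖MvPolynomial.eval x q'‖ₑ ∂ν := by
        refine setLIntegral_mono' hms fun x hx => ?_
        rw [Real.enorm_eq_ofReal_abs]
        apply ENNReal.ofReal_le_ofReal
        have h7 := hmle x hx
        have h8 := hq' x hx.1
        have h9 := abs_sub_abs_le_abs_sub (MvPolynomial.eval x q) (MvPolynomial.eval x q')
        rw [abs_sub_comm] at h9
        linarith
    _ ≤ ∫⁻ x, ‖MvPolynomial.eval x q'‖ₑ ∂ν := setLIntegral_le_lintegral _ _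

/-- Evaluation on the unit cube as a linear map into continuous functions. -/
noncomputable def toC (n : ℕ) :
    MvPolynomial (Fin n) ℝ →ₗ[ℝ] C(closedBall (0 : Fin n → ℝ) 1, ℝ) where
  toFun q := ⟨fun x => MvPolynomial.eval (x : Fin n → ℝ) q,
    (poly_cont q).comp continuous_subtype_val⟩
  map_add' p q := by ext; simp
  map_smul' a q := by ext; simp

lemma key_bound {n : ℕ} {d : ℝ} (hd : 0 < d) (hdn : (n : ℝ) - 1 < d) (hn : n ≠ 0)
    {A : ℝ≥0∞} (hA : A ≠ ∞) {ρ₀ : ℝ} (hρ₀ : 0 < ρ₀) (k : ℕ) :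
    ∃ C : ℝ≥0∞, C ≠ ∞ ∧ ∀ q : MvPolynomial (Fin n) ℝ, q.totalDegree ≤ k →
      ∀ ν : Measure (Fin n → ℝ), GoodMeas d A ρ₀ ν → ∀ x ∈ closedBall (0 : Fin n → ℝ) 1,
        ‖MvPolynomial.eval x q‖ₑ ≤ C * ∫⁻ x, ‖MvPolynomial.eval x q‖ₑ ∂ν := by
  set V := (MvPolynomial.restrictTotalDegree (Fin n) ℝ k).map (toC n) with hV
  have : FiniteDimensional ℝ V := inferInstance
  have : ProperSpace V := FiniteDimensional.proper ℝ V
  have hS : IsCompact (sphere (0 : V) 1) := isCompact_sphere 0 1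
  obtain ⟨δ, hδ, H⟩ : ∃ δ : ℝ, 0 < δ ∧ ∀ q : MvPolynomial (Fin n) ℝ,
      (∃ f ∈ sphere (0 : V) 1, toC n q = f) →
      ∀ ν : Measure (Fin n → ℝ), GoodMeas d A ρ₀ ν →
        ENNReal.ofReal δ ≤ ∫⁻ x, ‖MvPolynomial.eval x q‖ₑ ∂ν := by
    refine hS.induction_on (p := fun s => ∃ δ : ℝ, 0 < δ ∧ ∀ q : MvPolynomial (Fin n) ℝ,
      (∃ f ∈ s, toC n q = f) →
      ∀ ν : Measure (Fin n → ℝ), GoodMeas d A ρ₀ ν →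
        ENNReal.ofReal δ ≤ ∫⁻ x, ‖MvPolynomial.eval x q‖ₑ ∂ν) ?_ ?_ ?_ ?_
    · exact ⟨1, one_pos, by simp⟩
    · rintro s t hst ⟨δ, hδ, h⟩
      exact ⟨δ, hδ, fun q ⟨f, hf, hqf⟩ => h q ⟨f, hst hf, hqf⟩⟩
    · rintro s t ⟨δ, hδ, h⟩ ⟨δ', hδ', h'⟩
      refine ⟨min δ δ', lt_min hδ hδ', fun q ⟨f, hf, hqf⟩ ν hν => ?_⟩
      rcases hf with hf | hf
      · exact (ENNReal.ofReal_le_ofReal (min_le_left _ _)).trans (h q ⟨f, hf, hqf⟩ ν hν)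
      · exact (ENNReal.ofReal_le_ofReal (min_le_right _ _)).trans (h' q ⟨f, hf, hqf⟩ ν hν)
    · intro f hf
      obtain ⟨q₀, _, hq₀⟩ := f.2
      have hne : q₀ ≠ 0 := by
        rintro rfl
        rw [map_zero] at hq₀
        have : f = 0 := by ext1; exact hq₀.symm
        simp [this] at hf
      obtain ⟨δ, hδ, h⟩ := local_bound hd hdn hn hA hρ₀ q₀ hne
      refine ⟨closedBall f δ, mem_nhdsWithin_of_mem_nhds (closedBall_mem_nhds f hδ), δ / 2,
        by positivity, ?_⟩
      rintro q ⟨g, hg, hqg⟩ ν hν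
      refine h q (fun x hx => ?_) ν hν
      have h1 : dist (toC n q) (toC n q₀) ≤ δ := by
        rw [hqg, hq₀]; exact hg
      have h2 := (ContinuousMap.dist_apply_le_dist (f := toC n q) (g := toC n q₀) ⟨x, hx⟩).trans h1
      rwa [Real.dist_eq] at h2
  refine ⟨(ENNReal.ofReal δ)⁻¹, by simpa using hδ, fun q hq ν hν x hx => ?_⟩
  set f := toC n q with hf
  have hxf : |MvPolynomial.eval x q| ≤ ‖f‖ := f.norm_coe_le_norm ⟨x, hx⟩
  by_cases h0 : ‖f‖ = 0
  · have : MvPolynomial.eval x q = 0 := by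
      rw [h0] at hxf; exact abs_nonpos_iff.mp hxf
    simp [this]
  have hpos : 0 < ‖f‖ := lt_of_le_of_ne (norm_nonneg _) (Ne.symm h0)
  have hfV : f ∈ V := ⟨q, (MvPolynomial.mem_restrictTotalDegree _ _ _).mpr hq, rfl⟩
  have h1 := H (‖f‖⁻¹ • q) ⟨‖f‖⁻¹ • ⟨f, hfV⟩, by
    rw [mem_sphere_zero_iff_norm]
    change ‖‖f‖⁻¹ • f‖ = 1
    rw [norm_smul, norm_inv, norm_norm, inv_mul_cancel₀ h0], by simp [hf]⟩ ν hν
  have h2 : ∫⁻ x, ‖MvPolynomial.eval x (‖f‖⁻¹ • q)‖ₑ ∂ν =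
      (ENNReal.ofReal ‖f‖)⁻¹ * ∫⁻ x, ‖MvPolynomial.eval x q‖ₑ ∂ν := by
    rw [← lintegral_const_mul _ (poly_cont q).measurable.enorm]
    congr 1
    ext x
    rw [MvPolynomial.smul_eval, enorm_mul, Real.enorm_eq_ofReal (by positivity),
      ENNReal.ofReal_inv_of_pos hpos]
  rw [h2] at h1
  have hF0 : ENNReal.ofReal ‖f‖ ≠ 0 := (ENNReal.ofReal_pos.mpr hpos).ne'
  have hδ0 : ENNReal.ofReal δ ≠ 0 := by simpa using hδ
  calc ‖MvPolynomial.eval x q‖ₑ ≤ ENNReal.ofReal ‖f‖ := by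
        rw [Real.enorm_eq_ofReal_abs]; exact ENNReal.ofReal_le_ofReal hxf
    _ = (ENNReal.ofReal δ)⁻¹ * (ENNReal.ofReal ‖f‖ * ENNReal.ofReal δ) := by
        rw [mul_left_comm, ENNReal.inv_mul_cancel hδ0 ENNReal.ofReal_ne_top, mul_one]
    _ ≤ (ENNReal.ofReal δ)⁻¹ * (ENNReal.ofReal ‖f‖ * ((ENNReal.ofReal ‖f‖)⁻¹ *
          ∫⁻ x, ‖MvPolynomial.eval x q‖ₑ ∂ν)) := by gcongr
    _ = _ := by
        rw [← mul_assoc (ENNReal.ofReal ‖f‖), ENNReal.mul_inv_cancel hF0 ENNReal.ofReal_ne_top,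
          one_mul]

lemma rescale_poly {n : ℕ} (q : MvPolynomial (Fin n) ℝ) {k : ℕ} (hq : q.totalDegree ≤ k)
    (w : Fin n → ℝ) (s : ℝ) :
    ∃ q' : MvPolynomial (Fin n) ℝ, q'.totalDegree ≤ k ∧
      ∀ x, MvPolynomial.eval x q' = MvPolynomial.eval (w + s • x) q := by
  refine ⟨MvPolynomial.eval₂ MvPolynomial.C
    (fun i => MvPolynomial.C (w i) + MvPolynomial.C s * MvPolynomial.X i) q, ?_, ?_⟩
  · rw [← MvPolynomial.mem_restrictTotalDegree, MvPolynomial.eval₂_eq']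
    refine Submodule.sum_mem _ fun m hm => ?_
    rw [MvPolynomial.mem_restrictTotalDegree]
    refine (MvPolynomial.totalDegree_mul _ _).trans ?_
    rw [MvPolynomial.totalDegree_C, zero_add]
    refine (MvPolynomial.totalDegree_finsetProd _ _).trans ?_
    have h1 : ∑ i, m i ≤ k := by
      have := (MvPolynomial.le_totalDegree hm).trans hq
      rwa [Finsupp.sum_fintype _ _ (by simp)] at this
    refine (Finset.sum_le_sum fun i _ => ?_).trans h1
    refine (MvPolynomial.totalDegree_pow _ _).trans ?_
    have : (MvPolynomial.C (w i) + MvPolynomial.C s * MvPolynomial.X i :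
        MvPolynomial (Fin n) ℝ).totalDegree ≤ 1 := by
      refine (MvPolynomial.totalDegree_add _ _).trans (max_le (by simp) ?_)
      refine (MvPolynomial.totalDegree_mul _ _).trans ?_
      simp
    nlinarith
  · intro x
    rw [MvPolynomial.eval₂_eq', MvPolynomial.eval_eq' (w + s • x), map_sum]
    simp [map_prod]

lemma growth_ratio {d : ℝ} (hd : 0 < d) {c₁ c₂ : ℝ≥0∞} (hc₁ : 0 < c₁) (hc₁' : c₁ ≠ ∞)
    {r₀ ρ₀ ρ : ℝ} (hr₀ : 0 < r₀) (hρ₀ : 0 < ρ₀) (hρ : 0 < ρ) {a M : ℝ≥0∞}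
    (hM : c₁ * ENNReal.ofReal (r₀ * ρ₀) ^ d ≤ M)
    (ha : a ≤ c₂ * ENNReal.ofReal (2 * (r₀ * ρ)) ^ d) :
    M⁻¹ * a ≤ (c₂ / c₁ * ENNReal.ofReal (2 / ρ₀) ^ d) * ENNReal.ofReal ρ ^ d := by
  have e1 : 2 * (r₀ * ρ) = (2 / ρ₀ * ρ) * (r₀ * ρ₀) := by field_simp
  have hp : ENNReal.ofReal (r₀ * ρ₀) ^ d ≠ 0 := by
    have : 0 < ENNReal.ofReal (r₀ * ρ₀) := ENNReal.ofReal_pos.mpr (by positivity)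
    exact (ENNReal.rpow_pos this ENNReal.ofReal_ne_top).ne'
  have hptop : ENNReal.ofReal (r₀ * ρ₀) ^ d ≠ ∞ := by
    exact ENNReal.rpow_ne_top_of_nonneg hd.le ENNReal.ofReal_ne_top
  calc M⁻¹ * a ≤ (c₁ * ENNReal.ofReal (r₀ * ρ₀) ^ d)⁻¹ *
        (c₂ * ENNReal.ofReal (2 * (r₀ * ρ)) ^ d) := by gcongr
    _ = (c₁⁻¹ * (ENNReal.ofReal (r₀ * ρ₀) ^ d)⁻¹) *
        (c₂ * ((ENNReal.ofReal (2 / ρ₀) ^ d * ENNReal.ofReal ρ ^ d) *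
          ENNReal.ofReal (r₀ * ρ₀) ^ d)) := by
        rw [ENNReal.mul_inv (Or.inl hc₁.ne') (Or.inl hc₁'), e1,
          ENNReal.ofReal_mul (p := 2 / ρ₀ * ρ) (by positivity),
          ENNReal.ofReal_mul (p := 2 / ρ₀) (by positivity),
          ENNReal.mul_rpow_of_nonneg _ _ hd.le, ENNReal.mul_rpow_of_nonneg _ _ hd.le]
    _ = (c₂ / c₁ * ENNReal.ofReal (2 / ρ₀) ^ d) * ENNReal.ofReal ρ ^ d *
        ((ENNReal.ofReal (r₀ * ρ₀) ^ d)⁻¹ * ENNReal.ofReal (r₀ * ρ₀) ^ d) := by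
        rw [div_eq_mul_inv c₂ c₁]; ring
    _ = _ := by rw [ENNReal.inv_mul_cancel hp hptop, mul_one]

/-- Reverse Hölder inequality for polynomials on `Q ∩ S`, for a `d`-set `S` with
`n - 1 < d ≤ n` and a cube `Q` centered in `S` with side length `0 < ℓ(Q) ≤ R`:
for every polynomial `p` of degree `≤ k` and all `1 ≤ u, r ≤ ∞`, the normalized `L^r` mean of
`p` over `Q ∩ S` (w.r.t. `H^d`) is bounded by `C(S,R,n,u,r,k)` times the normalized `L^u`
mean of `p` over `Q ∩ S`. -/
theorem stmt_13 (n : ℕ) (d : ℝ) (hd1 : (n : ℝ) - 1 < d) (hdn : d ≤ n)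
    (S : Set (Fin n → ℝ)) (hScl : IsClosed S)
    (c₁ c₂ : ℝ≥0∞) (hc₁ : 0 < c₁) (hc₂ : c₂ ≠ ∞)
    (hreg : ∀ w ∈ S, ∀ ρ : ℝ, 0 < ρ → ρ ≤ 1 →
      c₁ * ENNReal.ofReal ρ ^ d ≤ μH[d] (closedBall w ρ ∩ S) ∧
        μH[d] (closedBall w ρ ∩ S) ≤ c₂ * ENNReal.ofReal ρ ^ d)
    (R : ℝ) (hR : 0 < R) (k : ℕ) (u r : ℝ≥0∞) (hu : 1 ≤ u) (hr : 1 ≤ r) :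
    ∃ C : ℝ≥0∞, C ≠ ∞ ∧
      ∀ (w : Fin n → ℝ) (r₀ : ℝ), w ∈ S → 0 < r₀ → 2 * r₀ ≤ R →
        ∀ P ∈ degLE n k,
          eLpNorm P r ((μH[d] (closedBall w r₀ ∩ S))⁻¹ •
              μH[d].restrict (closedBall w r₀ ∩ S))
            ≤ C * eLpNorm P u ((μH[d] (closedBall w r₀ ∩ S))⁻¹ •
                μH[d].restrict (closedBall w r₀ ∩ S)) := by
  have hms : ∀ w r₀, MeasurableSet (closedBall w r₀ ∩ S) := fun w r₀ =>
    isClosed_closedBall.measurableSet.inter hScl.measurableSet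
  set ρ₀ : ℝ := min 1 (1 / R) with hρ₀
  have hρ₀pos : 0 < ρ₀ := lt_min one_pos (by positivity)
  have hρ₀R : ρ₀ * R ≤ 1 := by
    calc ρ₀ * R ≤ 1 / R * R := by gcongr; exact min_le_right _ _
      _ = 1 := by field_simp
  have hlow : ∀ w r₀, w ∈ S → 0 < r₀ → 2 * r₀ ≤ R →
      c₁ * ENNReal.ofReal (r₀ * ρ₀) ^ d ≤ μH[d] (closedBall w r₀ ∩ S) := by
    intro w r₀ hw h0 hle
    refine (hreg w hw (r₀ * ρ₀) (by positivity) (by nlinarith)).1.trans ?_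
    apply measure_mono
    gcongr
    have : ρ₀ ≤ 1 := min_le_left _ _
    nlinarith
  have hne0 : ∀ w r₀, w ∈ S → 0 < r₀ → 2 * r₀ ≤ R → μH[d] (closedBall w r₀ ∩ S) ≠ 0 := by
    intro w r₀ hw h0 hle h
    have h1 := hlow w r₀ hw h0 hle
    rw [h, nonpos_iff_eq_zero, mul_eq_zero] at h1
    have : 0 < ENNReal.ofReal (r₀ * ρ₀) := ENNReal.ofReal_pos.mpr (by positivity)
    exact h1.elim hc₁.ne' (ENNReal.rpow_pos this ENNReal.ofReal_ne_top).ne'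
  have hnetop : ∀ w r₀, μH[d] (closedBall w r₀ ∩ S) ≠ ∞ := by
    intro w r₀
    have hK : IsCompact (closedBall w r₀ ∩ S) := (isCompact_closedBall w r₀).inter_right hScl
    refine (hK.measure_lt_top_of_nhdsWithin fun x hx => ?_).ne
    refine ⟨closedBall x 1 ∩ (closedBall w r₀ ∩ S), Filter.inter_mem
      (mem_nhdsWithin_of_mem_nhds (closedBall_mem_nhds x one_pos)) self_mem_nhdsWithin, ?_⟩
    refine lt_of_le_of_lt (measure_mono (Set.inter_subset_inter_right _ Set.inter_subset_right)) ?_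
    refine (hreg x hx.2 1 one_pos le_rfl).2.trans_lt ?_
    simp [lt_top_iff_ne_top, hc₂]
  suffices H : ∃ C : ℝ≥0∞, C ≠ ∞ ∧
      ∀ (w : Fin n → ℝ) (r₀ : ℝ), w ∈ S → 0 < r₀ → 2 * r₀ ≤ R →
        ∀ q : MvPolynomial (Fin n) ℝ, q.totalDegree ≤ k → ∀ y ∈ closedBall w r₀ ∩ S,
          ‖MvPolynomial.eval y q‖ₑ ≤ C * ∫⁻ x, ‖MvPolynomial.eval x q‖ₑ
            ∂((μH[d] (closedBall w r₀ ∩ S))⁻¹ • μH[d].restrict (closedBall w r₀ ∩ S)) by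
    obtain ⟨C, hC, H⟩ := H
    refine ⟨C, hC, fun w r₀ hw h0 hle P hP => ?_⟩
    obtain ⟨q, hq, hPq⟩ := hP
    obtain rfl : P = fun x => MvPolynomial.eval x q := funext hPq
    have H1 := H w r₀ hw h0 hle q hq
    set μ := (μH[d] (closedBall w r₀ ∩ S))⁻¹ • μH[d].restrict (closedBall w r₀ ∩ S) with hμ
    have hprob : IsProbabilityMeasure μ := ⟨by
      simp only [hμ, Measure.smul_apply, Measure.restrict_apply_univ, smul_eq_mul]
      exact ENNReal.inv_mul_cancel (hne0 w r₀ hw h0 hle) (hnetop w r₀)⟩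
    have hae : ∀ᵐ y ∂μ, ‖MvPolynomial.eval y q‖ₑ ≤
        C * ∫⁻ x, ‖MvPolynomial.eval x q‖ₑ ∂μ := by
      apply Measure.ae_smul_measure
      filter_upwards [ae_restrict_mem (hms w r₀)] with y hy using H1 y hy
    refine (eLpNorm_le_of_ae_enorm_bound hae).trans ?_
    rw [measure_univ, ENNReal.one_rpow, smul_eq_mul, mul_one]
    gcongr
    rw [← eLpNorm_one_eq_lintegral_enorm]
    exact eLpNorm_le_eLpNorm_of_exponent_le hu (poly_cont q).aestronglyMeasurable
  rcases S.eq_empty_or_nonempty with hSe | ⟨w₀, hw₀⟩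
  · exact ⟨1, by simp, fun w r₀ hw => by simp [hSe] at hw⟩
  have hc₁' : c₁ ≠ ∞ := by
    have h1 := (hreg w₀ hw₀ 1 one_pos le_rfl)
    have h2 := h1.1.trans h1.2
    simp only [ENNReal.ofReal_one, ENNReal.one_rpow, mul_one] at h2
    exact ne_top_of_le_ne_top hc₂ h2
  have huniv : ∀ w r₀, w ∈ S → 0 < r₀ → 2 * r₀ ≤ R → ((μH[d] (closedBall w r₀ ∩ S))⁻¹ •
      μH[d].restrict (closedBall w r₀ ∩ S)) Set.univ = 1 := by
    intro w r₀ hw h0 hle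
    simp only [Measure.smul_apply, Measure.restrict_apply_univ, smul_eq_mul]
    exact ENNReal.inv_mul_cancel (hne0 w r₀ hw h0 hle) (hnetop w r₀)
  by_cases hn : n = 0
  · subst hn
    refine ⟨1, by simp, fun w r₀ hw h0 hle q hq y hy => ?_⟩
    have : ∀ x, MvPolynomial.eval x q = MvPolynomial.eval y q := fun x => by
      rw [Subsingleton.elim x y]
    simp only [this]
    rw [lintegral_const, huniv w r₀ hw h0 hle]
    simp
  have hd : 0 < d := by
    have : (1 : ℝ) ≤ n := by exact_mod_cast Nat.one_le_iff_ne_zero.mpr hn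
    linarith
  set A : ℝ≥0∞ := c₂ / c₁ * ENNReal.ofReal (2 / ρ₀) ^ d with hA
  have hAtop : A ≠ ∞ := ENNReal.mul_ne_top (ENNReal.div_ne_top hc₂ hc₁.ne')
    (ENNReal.rpow_ne_top_of_nonneg hd.le ENNReal.ofReal_ne_top)
  obtain ⟨C, hC, H⟩ := key_bound hd hd1 hn hAtop hρ₀pos k
  refine ⟨C, hC, fun w r₀ hw h0 hle q hq y hy => ?_⟩
  obtain ⟨q', hq'deg, hq'⟩ := rescale_poly q hq w r₀
  set T : (Fin n → ℝ) → (Fin n → ℝ) := fun y => r₀⁻¹ • (y - w) with hT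
  have hTc : Continuous T := by fun_prop
  have hTinv : ∀ y, w + r₀ • T y = y := fun y => by
    simp only [hT]
    rw [smul_smul, mul_inv_cancel₀ h0.ne', one_smul, add_sub_cancel]
  have hTdist : ∀ a x, dist a (w + r₀ • x) = r₀ * dist (T a) x := by
    intro a x
    conv_lhs => rw [← hTinv a]
    rw [dist_add_left, dist_smul₀, Real.norm_of_nonneg h0.le]
  have hTball : ∀ x ρ, T ⁻¹' closedBall x ρ = closedBall (w + r₀ • x) (r₀ * ρ) := by
    intro x ρ
    ext a
    rw [Set.mem_preimage, mem_closedBall, mem_closedBall, hTdist]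
    exact (mul_le_mul_iff_right₀ h0).symm
  set μ := (μH[d] (closedBall w r₀ ∩ S))⁻¹ • μH[d].restrict (closedBall w r₀ ∩ S) with hμ
  have hT01 : T ⁻¹' closedBall 0 1 = closedBall w r₀ := by
    rw [hTball]; simp
  have hgood : GoodMeas d A ρ₀ (μ.map T) := by
    refine ⟨?_, ?_, ?_⟩
    · rw [Measure.map_apply hTc.measurable MeasurableSet.univ, Set.preimage_univ]
      exact huniv w r₀ hw h0 hle
    · rw [Measure.map_apply hTc.measurable isClosed_closedBall.measurableSet.compl,
        Set.preimage_compl, hT01, hμ, Measure.smul_apply,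
        Measure.restrict_apply isClosed_closedBall.measurableSet.compl]
      have : (closedBall w r₀)ᶜ ∩ (closedBall w r₀ ∩ S) = ∅ := by
        
        rw [← Set.inter_assoc, Set.compl_inter_self, Set.empty_inter]
      simp [this]
    · intro x ρ hρ hρle
      rw [Measure.map_apply hTc.measurable isClosed_closedBall.measurableSet, hTball, hμ,
        Measure.smul_apply, Measure.restrict_apply isClosed_closedBall.measurableSet, smul_eq_mul]
      refine growth_ratio hd hc₁ hc₁' h0 hρ₀pos hρ (hlow w r₀ hw h0 hle) ?_
      rcases (closedBall (w + r₀ • x) (r₀ * ρ) ∩ (closedBall w r₀ ∩ S)).eq_empty_or_nonempty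
        with he | ⟨z, hz1, hz2⟩
      · rw [he]; simp
      · refine le_trans (measure_mono ?_) (hreg z hz2.2 (2 * (r₀ * ρ)) (by positivity) ?_).2
        · rintro a ⟨ha1, ha2⟩
          refine ⟨?_, ha2.2⟩
          rw [mem_closedBall] at *
          have := dist_triangle_right a z (w + r₀ • x)
          linarith
        · calc 2 * (r₀ * ρ) = (2 * r₀) * ρ := by ring
            _ ≤ R * ρ₀ := by gcongr
            _ ≤ 1 := by linarith
  have hyT : T y ∈ closedBall (0 : Fin n → ℝ) 1 := by
    rw [← Set.mem_preimage, hT01]; exact hy.1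
  have h1 := H q' hq'deg _ hgood (T y) hyT
  rw [lintegral_map (poly_cont q').measurable.enorm hTc.measurable] at h1
  simp only [hq', hTinv] at h1
  exact h1
end
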